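/- arXiv:2109.03839 — 7 statements merged into one kernel-verified Lean document; each statement's English description precedes it below -/
import Mathlib

section
/- (Contraction of overdamped Langevin dynamics, Lemma 2) Let f : ℝ^d → ℝ be twice continuously differentiable with m·I ≼ ∇²f(x) ≼ L·I for all x (0 < m ≤ L). Let (x_t) and (y_t) be two solutions of the overdamped Langevin dynamics driven by the SAME standard d-dimensional Brownian motion (B_t), with square-integrable initial values x_0 = x and y_0 = y (measurable with respect to the initial σ-algebra). Then for all t ≥ 0, (E‖y_t − x_t‖²)^{1/2} ≤ (E‖y − x‖²)^{1/2} · exp(−m t). -/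
open MeasureTheory ProbabilityTheory Real
open scoped ENNReal NNReal

noncomputable section

/-- `ℝ^d` with the Euclidean structure. -/
abbrev Euc (d : ℕ) := EuclideanSpace ℝ (Fin d)

/-- The standard Gaussian measure `N(0, I_d)` on `ℝ^d`. -/
noncomputable def stdGaussian (d : ℕ) : Measure (Euc d) :=
  (Measure.pi fun _ : Fin d => gaussianReal 0 1).map (EuclideanSpace.equiv (Fin d) ℝ).symm

/-- The centered Gaussian measure on `ℝ^d` with covariance `σ2 • I_d`. -/
noncomputable def isoGaussian (d : ℕ) (σ2 : ℝ) : Measure (Euc d) :=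
  (stdGaussian d).map fun x => Real.sqrt σ2 • x

/-- `B` is a standard `d`-dimensional Brownian motion with respect to the filtration `ℱ`
under the probability measure `P`. -/
structure IsStdBrownian {d : ℕ} {Ω : Type*} {mΩ : MeasurableSpace Ω} (P : Measure Ω)
    (ℱ : Filtration ℝ mΩ) (B : ℝ → Ω → Euc d) : Prop where
  init : ∀ ω, B 0 ω = 0
  cont : ∀ ω, Continuous fun t => B t ω
  adapted : StronglyAdapted ℱ B
  incr_law : ∀ s t : ℝ, 0 ≤ s → s ≤ t →
    P.map (fun ω => B t ω - B s ω) = isoGaussian d (t - s)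
  incr_indep : ∀ s t : ℝ, 0 ≤ s → s ≤ t →
    Indep (MeasurableSpace.comap (fun ω => B t ω - B s ω) inferInstance) (ℱ s) P

/-- `X` is a (pathwise) solution of the overdamped Langevin dynamics
`dX_t = -∇f(X_t) dt + √2 dB_t`: a continuous adapted process satisfying the integral
equation `X_t = X_0 - ∫₀ᵗ ∇f(X_s) ds + √2 B_t` for all `t ≥ 0`. -/
structure IsLangevinSolution {d : ℕ} {Ω : Type*} {mΩ : MeasurableSpace Ω}
    (ℱ : Filtration ℝ mΩ) (f : Euc d → ℝ) (B : ℝ → Ω → Euc d) (X : ℝ → Ω → Euc d) : Prop where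
  cont : ∀ ω, Continuous fun t => X t ω
  adapted : StronglyAdapted ℱ X
  eqn : ∀ ω, ∀ t : ℝ, 0 ≤ t →
    X t ω = X 0 ω - (∫ s in (0:ℝ)..t, gradient f (X s ω)) + Real.sqrt 2 • B t ω

/-- The Hessian bounds `m • I ≼ ∇²f(x) ≼ L • I` for all `x`, expressed through the second
iterated Fréchet derivative: `m ‖v‖² ≤ ⟨v, ∇²f(x) v⟩ ≤ L ‖v‖²`. -/
def HessianBounds {d : ℕ} (m L : ℝ) (f : Euc d → ℝ) : Prop :=
  ∀ x v : Euc d, m * ‖v‖ ^ 2 ≤ iteratedFDeriv ℝ 2 f x ![v, v] ∧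
    iteratedFDeriv ℝ 2 f x ![v, v] ≤ L * ‖v‖ ^ 2

end

lemma grad_strong_mono {d : ℕ} {f : Euc d → ℝ} {m L : ℝ} (hf : ContDiff ℝ 2 f)
    (hH : HessianBounds m L f) (x y : Euc d) :
    m * ‖y - x‖ ^ 2 ≤ inner ℝ (gradient f y - gradient f x) (y - x) := by
  set v := y - x with hv
  have hd : ContDiff ℝ 1 (fderiv ℝ f) := hf.fderiv_right (by norm_num)
  have hder : ∀ s : ℝ, HasDerivAt (fun s : ℝ => fderiv ℝ f (x + s • v) v)
      (iteratedFDeriv ℝ 2 f (x + s • v) ![v, v]) s := by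
    intro s
    have h1 : HasDerivAt (fun s : ℝ => x + s • v) v s := by
      simpa using ((hasDerivAt_id s).smul_const v).const_add x
    have h2 := ((hd.differentiable (by norm_num)) (x + s • v)).hasFDerivAt.comp_hasDerivAt s h1
    have h3 := h2.clm_apply (hasDerivAt_const s v)
    rw [iteratedFDeriv_two_apply]
    simpa using h3
  have key : m * ‖v‖ ^ 2 * (1 - 0) ≤
      (fun s : ℝ => fderiv ℝ f (x + s • v) v) 1 - (fun s : ℝ => fderiv ℝ f (x + s • v) v) 0 := by
    apply Convex.mul_sub_le_image_sub_of_le_deriv (convex_univ)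
      (fun s _ => (hder s).continuousAt.continuousWithinAt)
      (fun s _ => (hder s).differentiableAt.differentiableWithinAt)
      (fun s _ => by rw [(hder s).deriv]; exact (hH _ _).1) 0 (Set.mem_univ _) 1 (Set.mem_univ _)
      zero_le_one
  have e : x + v = y := by simp [hv]
  simp only [one_smul, zero_smul, add_zero, e, sub_zero, mul_one] at key
  rw [inner_sub_left]
  simpa [gradient] using key

lemma path_contraction {d : ℕ} {f : Euc d → ℝ} {m L : ℝ} (hf : ContDiff ℝ 2 f)
    (hH : HessianBounds m L f) (x y b : ℝ → Euc d) (hx : Continuous x) (hy : Continuous y)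
    (ex : ∀ t, 0 ≤ t → x t = x 0 - (∫ s in (0:ℝ)..t, gradient f (x s)) + √2 • b t)
    (ey : ∀ t, 0 ≤ t → y t = y 0 - (∫ s in (0:ℝ)..t, gradient f (y s)) + √2 • b t)
    {t : ℝ} (ht : 0 ≤ t) : ‖y t - x t‖ ≤ ‖y 0 - x 0‖ * Real.exp (-m * t) := by
  have hg : Continuous (gradient f) :=
    (InnerProductSpace.toDual ℝ (Euc d)).symm.continuous.comp (hf.continuous_fderiv (by norm_num))
  have cx : Continuous fun s => gradient f (x s) := hg.comp hx
  have cy : Continuous fun s => gradient f (y s) := hg.comp hy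
  set w : ℝ → Euc d := fun t => y 0 - x 0 - ∫ s in (0:ℝ)..t, (gradient f (y s) - gradient f (x s))
    with hw
  have hwe : ∀ t, 0 ≤ t → w t = y t - x t := by
    intro t ht
    rw [ex t ht, ey t ht]
    simp only [hw]
    rw [intervalIntegral.integral_sub (cy.intervalIntegrable _ _) (cx.intervalIntegrable _ _)]
    abel
  have hwd : ∀ t, HasDerivAt w (-(gradient f (y t) - gradient f (x t))) t := by
    intro t
    have := ((cy.sub cx).integral_hasStrictDerivAt 0 t).hasDerivAt
    simpa [hw] using this.const_sub (y 0 - x 0)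
  have hh : ∀ t, HasDerivAt (fun t => ‖w t‖ ^ 2 * Real.exp (2 * m * t))
      (2 * inner ℝ (w t) (-(gradient f (y t) - gradient f (x t))) * Real.exp (2 * m * t) +
        ‖w t‖ ^ 2 * (Real.exp (2 * m * t) * (2 * m))) t := by
    intro t
    have h1 := (hwd t).norm_sq
    have h2 : HasDerivAt (fun t => Real.exp (2 * m * t)) (Real.exp (2 * m * t) * (2 * m)) t := by
      simpa using ((hasDerivAt_id t).const_mul (2 * m)).exp
    exact h1.mul h2
  have anti : AntitoneOn (fun t => ‖w t‖ ^ 2 * Real.exp (2 * m * t)) (Set.Ici 0) := by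
    apply antitoneOn_of_deriv_nonpos (convex_Ici 0)
      (fun s _ => (hh s).continuousAt.continuousWithinAt)
      (fun s _ => (hh s).differentiableAt.differentiableWithinAt)
    intro s hs
    rw [interior_Ici] at hs
    rw [(hh s).deriv, hwe s (le_of_lt hs), inner_neg_right, real_inner_comm]
    have := grad_strong_mono hf hH (x s) (y s)
    have hp := Real.exp_pos (2 * m * s)
    nlinarith
  have h0 := anti (Set.self_mem_Ici) (Set.mem_Ici.2 ht) ht
  simp only [hwe t ht, hwe 0 le_rfl, mul_zero, Real.exp_zero, mul_one] at h0
  have he : Real.exp (2 * m * t) = (Real.exp (m * t)) ^ 2 := by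
    rw [← Real.exp_nat_mul]; congr 1; push_cast; ring
  rw [he, ← mul_pow] at h0
  have h1 := (pow_le_pow_iff_left₀ (by positivity) (norm_nonneg _) two_ne_zero).1 h0
  rw [neg_mul, Real.exp_neg, ← div_eq_mul_inv, le_div_iff₀ (Real.exp_pos _)]
  exact h1

/-- **Contraction of overdamped Langevin dynamics** (Lemma 2).
If `f` is `m`-strongly convex and `L`-smooth (`0 < m ≤ L`), and `X`, `Y` are two solutions of
the overdamped Langevin dynamics driven by the *same* standard `d`-dimensional Brownian motion,
with square-integrable initial values, then for all `t ≥ 0`,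
`(E‖Y_t - X_t‖²)^{1/2} ≤ (E‖Y_0 - X_0‖²)^{1/2} · exp(-m t)`. -/
theorem langevin_contraction
    {d : ℕ} {Ω : Type*} {mΩ : MeasurableSpace Ω} {P : Measure Ω} [IsProbabilityMeasure P]
    {ℱ : Filtration ℝ mΩ} {f : Euc d → ℝ} {m L : ℝ}
    (hm : 0 < m) (hmL : m ≤ L) (hf : ContDiff ℝ 2 f) (hHess : HessianBounds m L f)
    {B X Y : ℝ → Ω → Euc d} (hB : IsStdBrownian P ℱ B)
    (hX : IsLangevinSolution ℱ f B X) (hY : IsLangevinSolution ℱ f B Y)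
    (hX0 : MemLp (X 0) 2 P) (hY0 : MemLp (Y 0) 2 P)
    {t : ℝ} (ht : 0 ≤ t) :
    (∫⁻ ω, (‖Y t ω - X t ω‖₊ : ℝ≥0∞) ^ 2 ∂P) ^ (1/2 : ℝ) ≤
      (∫⁻ ω, (‖Y 0 ω - X 0 ω‖₊ : ℝ≥0∞) ^ 2 ∂P) ^ (1/2 : ℝ) *
        ENNReal.ofReal (Real.exp (-m * t)) := by
  have hp : ∀ ω, ‖Y t ω - X t ω‖ ≤ ‖Y 0 ω - X 0 ω‖ * Real.exp (-m * t) := fun ω =>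
    path_contraction hf hHess (fun s => X s ω) (fun s => Y s ω) (fun s => B s ω)
      (hX.cont ω) (hY.cont ω) (hX.eqn ω) (hY.eqn ω) ht
  set c := ENNReal.ofReal (Real.exp (-m * t)) with hc
  have hp' : ∀ ω, (‖Y t ω - X t ω‖₊ : ℝ≥0∞) ≤ c * (‖Y 0 ω - X 0 ω‖₊ : ℝ≥0∞) := by
    intro ω
    have := ENNReal.ofReal_le_ofReal (hp ω)
    rw [ENNReal.ofReal_mul (norm_nonneg _), ofReal_norm_eq_enorm, ofReal_norm_eq_enorm,
      mul_comm] at this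
    exact this
  calc (∫⁻ ω, (‖Y t ω - X t ω‖₊ : ℝ≥0∞) ^ 2 ∂P) ^ (1/2 : ℝ)
      ≤ (∫⁻ ω, c ^ 2 * (‖Y 0 ω - X 0 ω‖₊ : ℝ≥0∞) ^ 2 ∂P) ^ (1/2 : ℝ) := by
        gcongr with ω
        rw [← mul_pow]
        gcongr
        exact hp' ω
    _ = (∫⁻ ω, (‖Y 0 ω - X 0 ω‖₊ : ℝ≥0∞) ^ 2 ∂P) ^ (1/2 : ℝ) * c := by
        rw [lintegral_const_mul' _ _ (by simp [hc]), ENNReal.mul_rpow_of_nonneg _ _ (by norm_num),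
          mul_comm]
        congr 1
        rw [← ENNReal.rpow_natCast, ← ENNReal.rpow_mul]
        norm_num
end

section
/- (Growth bound of Langevin dynamics, Lemma 3) Let f : ℝ^d → ℝ be twice continuously differentiable with m·I ≼ ∇²f(x) ≼ L·I for all x (0 < m ≤ L), κ = L/m, and ∇f(0) = 0. Let (x_t) be a solution of the overdamped Langevin dynamics driven by a standard d-dimensional Brownian motion with square-integrable initial value x_0 = x. Then for every h with 0 ≤ h ≤ 1/(4κL): E‖x_h − x‖² ≤ 6 (d + (m/2) E‖x‖²) h. -/
open MeasureTheory ProbabilityTheory Real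
open scoped ENNReal NNReal

lemma grad_bound {d : ℕ} {f : Euc d → ℝ} {m L : ℝ}
    (hm : 0 < m) (hmL : m ≤ L) (hf : ContDiff ℝ 2 f) (hHess : HessianBounds m L f)
    (hgrad0 : gradient f 0 = 0) (x : Euc d) : ‖gradient f x‖ ≤ L * ‖x‖ := by
  have hL : 0 ≤ L := by linarith
  have hd : Differentiable ℝ (fderiv ℝ f) :=
    (hf.fderiv_right (m := 1) (by norm_num)).differentiable (by norm_num)
  have hq : ∀ x v : Euc d, m * ‖v‖ ^ 2 ≤ fderiv ℝ (fderiv ℝ f) x v v ∧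
      fderiv ℝ (fderiv ℝ f) x v v ≤ L * ‖v‖ ^ 2 := by
    intro x v
    have := hHess x v
    rw [iteratedFDeriv_two_apply] at this
    simpa using this
  have hsym : ∀ x v w : Euc d, fderiv ℝ (fderiv ℝ f) x v w = fderiv ℝ (fderiv ℝ f) x w v := by
    intro x v w
    exact (hf.contDiffAt.isSymmSndFDerivAt (by simp)) v w
  have hbd : ∀ x : Euc d, ‖fderiv ℝ (fderiv ℝ f) x‖ ≤ L := by
    intro x
    refine ContinuousLinearMap.opNorm_le_bound _ hL fun v => ?_
    refine ContinuousLinearMap.opNorm_le_bound _ (by positivity) fun w => ?_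
    set H := fderiv ℝ (fderiv ℝ f) x with hH
    have hcs : (H v w) ^ 2 ≤ H v v * H w w := by
      have h0 : ∀ t : ℝ, 0 ≤ H w w * (t * t) + (2 * H v w) * t + H v v := by
        intro t
        have h1 := (hq x (v + t • w)).1
        have h2 : 0 ≤ m * ‖v + t • w‖ ^ 2 := by positivity
        rw [← hH] at h1
        simp only [map_add, map_smul, ContinuousLinearMap.add_apply, ContinuousLinearMap.smul_apply,
          smul_eq_mul] at h1
        have h3 := hsym x v w
        rw [← hH] at h3
        rw [← h3] at h1
        linarith
      have := discrim_le_zero h0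
      unfold discrim at this
      nlinarith
    have hv := hq x v
    have hw := hq x w
    rw [← hH] at hv hw
    have hv0 : 0 ≤ H v v := le_trans (by positivity) hv.1
    have hw0 : 0 ≤ H w w := le_trans (by positivity) hw.1
    rw [Real.norm_eq_abs]
    apply abs_le_of_sq_le_sq _ (by positivity)
    calc (H v w) ^ 2 ≤ H v v * H w w := hcs
      _ ≤ (L * ‖v‖ ^ 2) * (L * ‖w‖ ^ 2) := mul_le_mul hv.2 hw.2 hw0 (by positivity)
      _ = _ := by ring
  have hn : ∀ x, ‖gradient f x‖ = ‖fderiv ℝ f x‖ := by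
    intro x
    simp [gradient]
  have h0 : fderiv ℝ f 0 = 0 := by
    have := hn 0
    rw [hgrad0, norm_zero] at this
    exact norm_eq_zero.1 this.symm
  have := Convex.norm_image_sub_le_of_norm_fderiv_le (𝕜 := ℝ) (f := fderiv ℝ f) (s := Set.univ)
    (x := 0) (y := x) (fun x _ => hd x) (fun x _ => hbd x) convex_univ trivial trivial
  rw [h0, sub_zero, sub_zero] at this
  rw [hn]; exact this

lemma path_bound {y a : ℝ → ℝ} {L h : ℝ} (hL : 0 ≤ L) (hh : 0 < h) (hLh : L * h ≤ 1 / 4)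
    (hy : Continuous y) (ha : Continuous a) (hy0 : ∀ t, 0 ≤ y t) (ha0 : ∀ t, 0 ≤ a t)
    (hya : ∀ t, 0 ≤ t → t ≤ h → y t ≤ a t + L * ∫ s in (0:ℝ)..t, y s) :
    y h ^ 2 ≤ 4 / 3 * a h ^ 2 + 4 / 9 * (h⁻¹ * ∫ s in (0:ℝ)..h, a s ^ 2) := by
  set I := ∫ s in (0:ℝ)..h, y s with hI
  set A := ∫ s in (0:ℝ)..h, a s with hA
  set Q := ∫ s in (0:ℝ)..h, a s ^ 2 with hQ
  have hI0 : 0 ≤ I := intervalIntegral.integral_nonneg hh.le fun t _ => hy0 t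
  have hA0 : 0 ≤ A := intervalIntegral.integral_nonneg hh.le fun t _ => ha0 t
  have h1 : I ≤ ∫ s in (0:ℝ)..h, (a s + L * I) := by
    apply intervalIntegral.integral_mono_on hh.le (hy.intervalIntegrable _ _)
      ((ha.add continuous_const).intervalIntegrable _ _)
    intro t ht
    refine (hya t ht.1 ht.2).trans ?_
    have hmono : ∫ s in (0:ℝ)..t, y s ≤ I :=
      intervalIntegral.integral_mono_interval le_rfl ht.1 ht.2
        (Filter.Eventually.of_forall hy0) (hy.intervalIntegrable _ _)
    have := mul_le_mul_of_nonneg_left hmono hL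
    simp only [Pi.add_apply]
    linarith
  rw [intervalIntegral.integral_add (ha.intervalIntegrable _ _)
    (continuous_const.intervalIntegrable _ _), intervalIntegral.integral_const, smul_eq_mul] at h1
  have h2 : I ≤ 4 / 3 * A := by nlinarith
  have hCS : A ^ 2 ≤ h * Q := by
    have h3 : 0 ≤ ∫ s in (0:ℝ)..h, (a s ^ 2 - 2 * (A / h) * a s + (A / h) ^ 2) :=
      intervalIntegral.integral_nonneg hh.le fun t _ => by nlinarith [sq_nonneg (a t - A / h)]
    rw [intervalIntegral.integral_add (Continuous.intervalIntegrable (by fun_prop) _ _)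
      (Continuous.intervalIntegrable (by fun_prop) _ _),
      intervalIntegral.integral_sub (Continuous.intervalIntegrable (by fun_prop) _ _)
      (Continuous.intervalIntegrable (by fun_prop) _ _), intervalIntegral.integral_const_mul,
      intervalIntegral.integral_const, smul_eq_mul, ← hQ, ← hA] at h3
    have h4 : Q - 2 * (A / h) * A + (h - 0) * (A / h) ^ 2 = (h * Q - A ^ 2) / h := by
      field_simp; ring
    rw [h4] at h3
    have := (div_nonneg_iff.1 h3)
    rcases this with h5 | h5 <;> linarith
  have h5 : y h ≤ a h + 4 / 3 * L * A := by
    have := hya h hh.le le_rfl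
    rw [← hI] at this
    nlinarith
  have h6 : (L * A) ^ 2 ≤ 1 / 16 * (h⁻¹ * Q) := by
    have hx : A ^ 2 ≤ h ^ 2 * (h⁻¹ * Q) := by
      have : h ^ 2 * (h⁻¹ * Q) = h * Q := by field_simp
      rw [this]; exact hCS
    have hr : 0 ≤ h⁻¹ * Q := by
      have : 0 ≤ Q := intervalIntegral.integral_nonneg hh.le fun t _ => sq_nonneg _
      positivity
    have hLh2 : (L * h) ^ 2 ≤ 1 / 16 := by
      have : 0 ≤ L * h := by positivity
      nlinarith
    calc (L * A) ^ 2 = L ^ 2 * A ^ 2 := by ring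
      _ ≤ L ^ 2 * (h ^ 2 * (h⁻¹ * Q)) := by gcongr
      _ = (L * h) ^ 2 * (h⁻¹ * Q) := by ring
      _ ≤ _ := by gcongr
  have h7 : y h ^ 2 ≤ (a h + 4 / 3 * L * A) ^ 2 := pow_le_pow_left₀ (hy0 h) h5 2
  nlinarith [sq_nonneg (a h - 4 * L * A)]

lemma moment_std (d : ℕ) : ∫⁻ x, ENNReal.ofReal (‖x‖ ^ 2) ∂(_root_.stdGaussian d) = d := by
  unfold _root_.stdGaussian
  have h1 : ∫⁻ x : ℝ, ENNReal.ofReal (x ^ 2) ∂(gaussianReal 0 1) = 1 := by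
    have hi : Integrable (fun x : ℝ => x ^ 2) (gaussianReal 0 1) :=
      (memLp_id_gaussianReal 2).integrable_sq
    rw [← ofReal_integral_eq_lintegral_ofReal hi (Filter.Eventually.of_forall fun x => sq_nonneg x)]
    have := variance_id_gaussianReal (μ := 0) (v := 1)
    rw [variance_eq_integral (by fun_prop)] at this
    simp at this
    rw [this]; simp
  rw [lintegral_map (by fun_prop) (by fun_prop)]
  have h2 : ∀ x : Fin d → ℝ,
      ENNReal.ofReal (‖(EuclideanSpace.equiv (Fin d) ℝ).symm x‖ ^ 2) =
        ∑ i, ENNReal.ofReal (x i ^ 2) := by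
    intro x
    rw [EuclideanSpace.real_norm_sq_eq, ENNReal.ofReal_sum_of_nonneg fun i _ => sq_nonneg _]
    rfl
  simp_rw [h2]
  rw [lintegral_finsetSum _ (fun i _ => by fun_prop)]
  have h3 : ∀ i : Fin d, ∫⁻ x : Fin d → ℝ, ENNReal.ofReal (x i ^ 2)
      ∂(Measure.pi fun _ : Fin d => gaussianReal 0 1) = 1 := by
    intro i
    have := (measurePreserving_eval (fun _ : Fin d => gaussianReal 0 1) i).lintegral_comp
      (f := fun x : ℝ => ENNReal.ofReal (x ^ 2)) (by fun_prop)
    simpa [h1] using this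
  simp [h3]

lemma moment_iso (d : ℕ) {t : ℝ} (ht : 0 ≤ t) :
    ∫⁻ x, ENNReal.ofReal (‖x‖ ^ 2) ∂(isoGaussian d t) = ENNReal.ofReal (d * t) := by
  unfold isoGaussian
  rw [lintegral_map (by fun_prop) (by fun_prop)]
  have : ∀ x : Euc d, ENNReal.ofReal (‖√t • x‖ ^ 2) = ENNReal.ofReal t * ENNReal.ofReal (‖x‖ ^ 2) := by
    intro x
    rw [norm_smul, mul_pow, Real.norm_eq_abs, sq_abs, Real.sq_sqrt ht, ENNReal.ofReal_mul ht]
  simp_rw [this]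
  rw [lintegral_const_mul _ (by fun_prop), moment_std, mul_comm, ENNReal.ofReal_mul (by positivity)]
  simp

lemma moment_B {d : ℕ} {Ω : Type*} {mΩ : MeasurableSpace Ω} {P : Measure Ω}
    {ℱ : Filtration ℝ mΩ} {B : ℝ → Ω → Euc d} (hB : IsStdBrownian P ℱ B) {t : ℝ} (ht : 0 ≤ t) :
    ∫⁻ ω, ENNReal.ofReal (‖B t ω‖ ^ 2) ∂P = ENNReal.ofReal (d * t) := by
  have h1 := hB.incr_law 0 t le_rfl ht
  simp only [hB.init, sub_zero] at h1
  have hm : Measurable (B t) := ((hB.adapted t).mono (ℱ.le t)).measurable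
  have := moment_iso d ht
  rw [← h1, lintegral_map (by fun_prop) hm] at this
  exact this

theorem langevin_growth_bound
    {d : ℕ} {Ω : Type*} {mΩ : MeasurableSpace Ω} {P : Measure Ω} [IsProbabilityMeasure P]
    {ℱ : Filtration ℝ mΩ} {f : Euc d → ℝ} {m L : ℝ}
    (hm : 0 < m) (hmL : m ≤ L) (hf : ContDiff ℝ 2 f) (hHess : HessianBounds m L f)
    (hgrad0 : gradient f 0 = 0)
    {B X : ℝ → Ω → Euc d} (hB : IsStdBrownian P ℱ B)
    (hX : IsLangevinSolution ℱ f B X) (hX0 : MemLp (X 0) 2 P)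
    {h : ℝ} (hh0 : 0 ≤ h) (hh1 : h ≤ 1 / (4 * (L / m) * L)) :
    (∫⁻ ω, (‖X h ω - X 0 ω‖₊ : ℝ≥0∞) ^ 2 ∂P) ≤
      ENNReal.ofReal (6 * (d + m / 2 * ∫ ω, ‖X 0 ω‖ ^ 2 ∂P) * h) := by
  rcases hh0.eq_or_lt with rfl | hh
  · simp
  have hL : 0 < L := by linarith
  have hL2h : L ^ 2 * h ≤ m / 4 := by
    have h1 : 1 / (4 * (L / m) * L) = m / (4 * L ^ 2) := by field_simp
    rw [h1, le_div_iff₀ (by positivity)] at hh1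
    linarith
  have hLh : L * h ≤ 1 / 4 := by
    have : L * (L * h) ≤ L * (1 / 4) := by nlinarith
    exact le_of_mul_le_mul_left this hL
  have hgc : Continuous (gradient f) := by
    unfold gradient
    exact (LinearIsometryEquiv.continuous _).comp (hf.continuous_fderiv (by norm_num))
  -- pathwise bound
  have hpath : ∀ ω, ‖X h ω - X 0 ω‖ ^ 2 ≤ 48 / 11 * (L * h) ^ 2 * ‖X 0 ω‖ ^ 2 +
      9 / 2 * ‖B h ω‖ ^ 2 + 3 / 2 * h⁻¹ * ∫ s in (0:ℝ)..h, ‖B s ω‖ ^ 2 := by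
    intro ω
    have hXc := hX.cont ω
    have hBc := hB.cont ω
    set c := L * h * ‖X 0 ω‖ with hc
    have hc0 : 0 ≤ c := by positivity
    have hp := path_bound (y := fun t => ‖X t ω - X 0 ω‖) (a := fun t => c + √2 * ‖B t ω‖)
      hL.le hh hLh (by fun_prop) (by fun_prop) (fun t => norm_nonneg _) (fun t => by positivity) ?_
    · have hsq : ∀ s, (c + √2 * ‖B s ω‖) ^ 2 ≤ 27 / 11 * c ^ 2 + 27 / 8 * ‖B s ω‖ ^ 2 := by
        intro s
        have h2 : (√2 : ℝ) ^ 2 = 2 := Real.sq_sqrt (by norm_num)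
        set b := √2 * ‖B s ω‖
        have hb : b ^ 2 = 2 * ‖B s ω‖ ^ 2 := by rw [mul_pow, h2]
        nlinarith [sq_nonneg (16 * c - 11 * b)]
      have hint : ∫ s in (0:ℝ)..h, (c + √2 * ‖B s ω‖) ^ 2 ≤
          h * (27 / 11 * c ^ 2) + 27 / 8 * ∫ s in (0:ℝ)..h, ‖B s ω‖ ^ 2 := by
        have := intervalIntegral.integral_mono_on (μ := volume) hh.le
          (f := fun s => (c + √2 * ‖B s ω‖) ^ 2)
          (g := fun s => 27 / 11 * c ^ 2 + 27 / 8 * ‖B s ω‖ ^ 2)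
          (Continuous.intervalIntegrable (by fun_prop) _ _)
          (Continuous.intervalIntegrable (by fun_prop) _ _) (fun s _ => hsq s)
        rw [intervalIntegral.integral_add (Continuous.intervalIntegrable (by fun_prop) _ _)
          (Continuous.intervalIntegrable (by fun_prop) _ _), intervalIntegral.integral_const,
          intervalIntegral.integral_const_mul, smul_eq_mul, sub_zero] at this
        exact this
      have hint2 := mul_le_mul_of_nonneg_left hint (inv_nonneg.2 hh.le)
      have he : h⁻¹ * (h * (27 / 11 * c ^ 2) + 27 / 8 * ∫ s in (0:ℝ)..h, ‖B s ω‖ ^ 2) =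
          27 / 11 * c ^ 2 + 27 / 8 * (h⁻¹ * ∫ s in (0:ℝ)..h, ‖B s ω‖ ^ 2) := by
        field_simp
      rw [he] at hint2
      have hcc : c ^ 2 = (L * h) ^ 2 * ‖X 0 ω‖ ^ 2 := by rw [hc]; ring
      have := hsq h
      rw [hcc] at this hint2
      linarith
    · intro t ht0 hth
      have he : X t ω - X 0 ω = -(∫ s in (0:ℝ)..t, gradient f (X s ω)) + √2 • B t ω := by
        rw [hX.eqn ω t ht0]; abel
      have hi : ‖∫ s in (0:ℝ)..t, gradient f (X s ω)‖ ≤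
          ∫ s in (0:ℝ)..t, (L * ‖X 0 ω‖ + L * ‖X s ω - X 0 ω‖) := by
        refine (intervalIntegral.norm_integral_le_integral_norm ht0).trans ?_
        refine intervalIntegral.integral_mono_on ht0
          ((hgc.comp hXc).norm.intervalIntegrable _ _)
          (Continuous.intervalIntegrable (by fun_prop) _ _) fun s _ => ?_
        refine (grad_bound hm hmL hf hHess hgrad0 _).trans ?_
        rw [← mul_add]
        gcongr
        calc ‖X s ω‖ = ‖X 0 ω + (X s ω - X 0 ω)‖ := by congr 1; abel
          _ ≤ _ := norm_add_le _ _
      rw [intervalIntegral.integral_add (Continuous.intervalIntegrable (by fun_prop) _ _)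
        (Continuous.intervalIntegrable (by fun_prop) _ _), intervalIntegral.integral_const,
        intervalIntegral.integral_const_mul, smul_eq_mul, sub_zero] at hi
      have ht : t * (L * ‖X 0 ω‖) ≤ c := by
        rw [hc]
        have : 0 ≤ L * ‖X 0 ω‖ := by positivity
        nlinarith
      have hn : ‖X t ω - X 0 ω‖ ≤ ‖∫ s in (0:ℝ)..t, gradient f (X s ω)‖ + √2 * ‖B t ω‖ := by
        rw [he]
        refine (norm_add_le _ _).trans ?_
        rw [norm_neg, norm_smul, Real.norm_eq_abs, abs_of_nonneg (Real.sqrt_nonneg _)]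
      linarith
  have hBm : ∀ t, Measurable (B t) := fun t => ((hB.adapted t).mono (ℱ.le t)).measurable
  have hXm : ∀ t, Measurable (X t) := fun t => ((hX.adapted t).mono (ℱ.le t)).measurable
  have hjoint : Measurable (Function.uncurry fun (ω : Ω) (s : ℝ) => B s ω) := by
    have := measurable_uncurry_of_continuous_of_measurable (u := B) hB.cont hBm
    exact this.comp measurable_swap
  have hpath2 : ∀ ω, (‖X h ω - X 0 ω‖₊ : ℝ≥0∞) ^ 2 ≤
      ENNReal.ofReal (48 / 11 * (L * h) ^ 2) * ENNReal.ofReal (‖X 0 ω‖ ^ 2) +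
      ENNReal.ofReal (9 / 2) * ENNReal.ofReal (‖B h ω‖ ^ 2) + ENNReal.ofReal (3 / 2 * h⁻¹) *
        ∫⁻ s in Set.Ioc 0 h, ENNReal.ofReal (‖B s ω‖ ^ 2) := by
    intro ω
    have hBc := hB.cont ω
    have e1 : (‖X h ω - X 0 ω‖₊ : ℝ≥0∞) ^ 2 = ENNReal.ofReal (‖X h ω - X 0 ω‖ ^ 2) := by
      rw [ENNReal.ofReal_pow (norm_nonneg _), ofReal_norm_eq_enorm]; rfl
    have e2 : ∫⁻ s in Set.Ioc 0 h, ENNReal.ofReal (‖B s ω‖ ^ 2) =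
        ENNReal.ofReal (∫ s in (0:ℝ)..h, ‖B s ω‖ ^ 2) := by
      rw [intervalIntegral.integral_of_le hh.le, ofReal_integral_eq_lintegral_ofReal]
      · exact (Continuous.intervalIntegrable (μ := volume) (by fun_prop) 0 h).1
      · exact Filter.Eventually.of_forall fun s => by positivity
    have hQ : 0 ≤ ∫ s in (0:ℝ)..h, ‖B s ω‖ ^ 2 :=
      intervalIntegral.integral_nonneg hh.le fun s _ => by positivity
    rw [e1, e2, ← ENNReal.ofReal_mul (by positivity), ← ENNReal.ofReal_mul (by positivity),
      ← ENNReal.ofReal_mul (by positivity), ← ENNReal.ofReal_add (by positivity) (by positivity),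
      ← ENNReal.ofReal_add (by positivity) (by positivity)]
    exact ENNReal.ofReal_le_ofReal (hpath ω)
  have hX0i : ∫⁻ ω, ENNReal.ofReal (‖X 0 ω‖ ^ 2) ∂P = ENNReal.ofReal (∫ ω, ‖X 0 ω‖ ^ 2 ∂P) := by
    rw [ofReal_integral_eq_lintegral_ofReal hX0.norm.integrable_sq]
    exact Filter.Eventually.of_forall fun s => by positivity
  have hX0n : 0 ≤ ∫ ω, ‖X 0 ω‖ ^ 2 ∂P := integral_nonneg fun _ => by positivity
  have hjm : Measurable (Function.uncurry fun (ω : Ω) (s : ℝ) => ENNReal.ofReal (‖B s ω‖ ^ 2)) :=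
    (hjoint.norm.pow_const 2).ennreal_ofReal
  have hdouble : ∫⁻ ω, (∫⁻ s in Set.Ioc 0 h, ENNReal.ofReal (‖B s ω‖ ^ 2)) ∂P ≤
      ENNReal.ofReal (d * h * h) := by
    rw [lintegral_lintegral_swap hjm.aemeasurable]
    calc ∫⁻ s in Set.Ioc 0 h, ∫⁻ ω, ENNReal.ofReal (‖B s ω‖ ^ 2) ∂P
        ≤ ∫⁻ s in Set.Ioc 0 h, ENNReal.ofReal (d * h) := by
          refine setLIntegral_mono' measurableSet_Ioc fun s hs => ?_
          rw [moment_B hB hs.1.le]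
          apply ENNReal.ofReal_le_ofReal
          gcongr
          exact hs.2
      _ = _ := by
          rw [setLIntegral_const, Real.volume_Ioc, sub_zero, ← ENNReal.ofReal_mul (by positivity)]
  calc (∫⁻ ω, (‖X h ω - X 0 ω‖₊ : ℝ≥0∞) ^ 2 ∂P)
      ≤ ∫⁻ ω, (ENNReal.ofReal (48 / 11 * (L * h) ^ 2) * ENNReal.ofReal (‖X 0 ω‖ ^ 2) +
      ENNReal.ofReal (9 / 2) * ENNReal.ofReal (‖B h ω‖ ^ 2) + ENNReal.ofReal (3 / 2 * h⁻¹) *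
        ∫⁻ s in Set.Ioc 0 h, ENNReal.ofReal (‖B s ω‖ ^ 2)) ∂P := lintegral_mono hpath2
    _ = ENNReal.ofReal (48 / 11 * (L * h) ^ 2) * ENNReal.ofReal (∫ ω, ‖X 0 ω‖ ^ 2 ∂P) +
      ENNReal.ofReal (9 / 2) * ENNReal.ofReal (d * h) + ENNReal.ofReal (3 / 2 * h⁻¹) *
        ∫⁻ ω, (∫⁻ s in Set.Ioc 0 h, ENNReal.ofReal (‖B s ω‖ ^ 2)) ∂P := by
      have m1 : Measurable fun ω => ENNReal.ofReal (‖X 0 ω‖ ^ 2) :=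
        ((hXm 0).norm.pow_const 2).ennreal_ofReal
      have m2 : Measurable fun ω => ENNReal.ofReal (‖B h ω‖ ^ 2) :=
        ((hBm h).norm.pow_const 2).ennreal_ofReal
      have m3 : Measurable fun ω => ∫⁻ s in Set.Ioc 0 h, ENNReal.ofReal (‖B s ω‖ ^ 2) :=
        hjm.lintegral_prod_right
      rw [lintegral_add_right _ (m3.const_mul _),
        lintegral_add_left (m1.const_mul _), lintegral_const_mul _ m1, lintegral_const_mul _ m2,
        lintegral_const_mul _ m3, hX0i, moment_B hB hh.le]
    _ ≤ ENNReal.ofReal (48 / 11 * (L * h) ^ 2) * ENNReal.ofReal (∫ ω, ‖X 0 ω‖ ^ 2 ∂P) +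
      ENNReal.ofReal (9 / 2) * ENNReal.ofReal (d * h) + ENNReal.ofReal (3 / 2 * h⁻¹) *
        ENNReal.ofReal (d * h * h) := by gcongr
    _ ≤ _ := by
      rw [← ENNReal.ofReal_mul (by positivity), ← ENNReal.ofReal_mul (by positivity),
        ← ENNReal.ofReal_mul (by positivity), ← ENNReal.ofReal_add (by positivity) (by positivity),
        ← ENNReal.ofReal_add (by positivity) (by positivity)]
      apply ENNReal.ofReal_le_ofReal
      have e : 3 / 2 * h⁻¹ * (d * h * h) = 3 / 2 * (d * h) := by field_simp
      rw [e]
      set E := ∫ ω, ‖X 0 ω‖ ^ 2 ∂P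
      have k1 : (L * h) ^ 2 * E ≤ m / 4 * (h * E) := by
        have : (L * h) ^ 2 * E = L ^ 2 * h * (h * E) := by ring
        rw [this]
        gcongr
      have k2 : 0 ≤ m * (h * E) := by positivity
      nlinarith
end

section
/- (Bound on evolved deviation, Lemma 4) Let f : ℝ^d → ℝ be twice continuously differentiable with m·I ≼ ∇²f(x) ≼ L·I for all x (0 < m ≤ L), κ = L/m. Let (x_t) and (y_t) be two solutions of the overdamped Langevin dynamics driven by the SAME standard d-dimensional Brownian motion, with square-integrable initial values x and y. Define z = (x_h − y_h) − (x − y). Then for every h with 0 < h ≤ 1/(4κL): E‖z‖² ≤ (m/4) · E‖x − y‖² · h. -/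
open MeasureTheory ProbabilityTheory Real
open scoped ENNReal NNReal

section Helpers

variable {d : ℕ} {f : Euc d → ℝ} {m L : ℝ}

lemma fderiv_diff_aux (hf : ContDiff ℝ 2 f) : Differentiable ℝ (fderiv ℝ f) :=
  (hf.fderiv_right (m := 1) (by norm_num)).differentiable (by norm_num)

lemma hess_quad_aux (hHess : HessianBounds m L f) (x v : Euc d) :
    m * ‖v‖ ^ 2 ≤ fderiv ℝ (fderiv ℝ f) x v v ∧
      fderiv ℝ (fderiv ℝ f) x v v ≤ L * ‖v‖ ^ 2 := by
  have := hHess x v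
  rw [iteratedFDeriv_two_apply] at this
  simpa using this

lemma hess_symm_aux (hf : ContDiff ℝ 2 f) (x v w : Euc d) :
    fderiv ℝ (fderiv ℝ f) x v w = fderiv ℝ (fderiv ℝ f) x w v := by
  have h : IsSymmSndFDerivAt ℝ f x := hf.contDiffAt.isSymmSndFDerivAt (by simp)
  exact h v w

lemma hess_norm_aux (hm : 0 < m) (hmL : m ≤ L) (hf : ContDiff ℝ 2 f)
    (hHess : HessianBounds m L f) (x : Euc d) : ‖fderiv ℝ (fderiv ℝ f) x‖ ≤ L := by
  have hL : 0 < L := hm.trans_le hmL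
  have key : ∀ v w : Euc d, |fderiv ℝ (fderiv ℝ f) x v w| ^ 2 ≤ (L * ‖v‖ * ‖w‖) ^ 2 := by
    intro v w
    set A := fderiv ℝ (fderiv ℝ f) x with hA
    have hs : A v w = A w v := hess_symm_aux hf x v w
    have hq : ∀ u, 0 ≤ A u u ∧ A u u ≤ L * ‖u‖ ^ 2 := fun u =>
      ⟨le_trans (by positivity) (hess_quad_aux hHess x u).1, (hess_quad_aux hHess x u).2⟩
    have hdisc : ∀ t : ℝ, 0 ≤ A w w * (t * t) + (2 * A v w) * t + A v v := by
      intro t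
      have := (hq (v + t • w)).1
      simp only [map_add, map_smul, add_apply, smul_apply,
        smul_eq_mul] at this
      rw [← hs] at this
      linarith
    have h1 := discrim_le_zero hdisc
    rw [discrim] at h1
    have h2 : A w w * A v v ≤ (L * ‖w‖ ^ 2) * (L * ‖v‖ ^ 2) :=
      mul_le_mul (hq w).2 (hq v).2 (hq v).1 (by positivity)
    rw [sq_abs]
    nlinarith
  refine ContinuousLinearMap.opNorm_le_bound _ hL.le fun v => ?_
  refine ContinuousLinearMap.opNorm_le_bound _ (by positivity) fun w => ?_
  rw [Real.norm_eq_abs]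
  exact le_of_sq_le_sq (key v w) (by positivity)

lemma grad_lip_aux (hm : 0 < m) (hmL : m ≤ L) (hf : ContDiff ℝ 2 f)
    (hHess : HessianBounds m L f) (x y : Euc d) :
    ‖gradient f x - gradient f y‖ ≤ L * ‖x - y‖ := by
  rw [gradient, gradient, ← map_sub, LinearIsometryEquiv.norm_map]
  exact convex_univ.norm_image_sub_le_of_norm_fderiv_le (𝕜 := ℝ)
    (fun z _ => fderiv_diff_aux hf z)
    (fun z _ => hess_norm_aux hm hmL hf hHess z) (Set.mem_univ y) (Set.mem_univ x)

lemma grad_mono_aux (hm : 0 < m) (hf : ContDiff ℝ 2 f)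
    (hHess : HessianBounds m L f) (x y : Euc d) :
    0 ≤ inner ℝ (x - y) (gradient f x - gradient f y) := by
  have hd : ∀ t : ℝ, HasDerivAt (fun t : ℝ => fderiv ℝ f (y + t • (x - y)) (x - y))
      (fderiv ℝ (fderiv ℝ f) (y + t • (x - y)) (x - y) (x - y)) t := by
    intro t
    have h1 : HasDerivAt (fun t : ℝ => y + t • (x - y)) (x - y) t := by
      simpa using ((hasDerivAt_id t).smul_const (x - y)).const_add y
    have h2 := (fderiv_diff_aux hf (y + t • (x - y))).hasFDerivAt.comp_hasDerivAt t h1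
    have h3 := h2.clm_apply (hasDerivAt_const t (x - y))
    simpa using h3
  have hmono : Monotone (fun t : ℝ => fderiv ℝ f (y + t • (x - y)) (x - y)) := by
    apply monotone_of_deriv_nonneg (fun t => (hd t).differentiableAt)
    intro t
    rw [(hd t).deriv]
    exact le_trans (by positivity) (hess_quad_aux hHess _ _).1
  have h01 := hmono (zero_le_one' ℝ)
  simp only [zero_smul, add_zero, one_smul, add_sub_cancel] at h01
  rw [inner_sub_right, real_inner_comm, gradient, InnerProductSpace.toDual_symm_apply,
    real_inner_comm, gradient, InnerProductSpace.toDual_symm_apply]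
  linarith

lemma path_aux (hm : 0 < m) (hmL : m ≤ L) (hf : ContDiff ℝ 2 f)
    (hHess : HessianBounds m L f) (X Y : ℝ → Euc d) (hX : Continuous X) (hY : Continuous Y)
    (heq : ∀ t, 0 ≤ t → X t - Y t = (X 0 - Y 0) -
      ∫ s in (0:ℝ)..t, (gradient f (X s) - gradient f (Y s)))
    {h : ℝ} (hh : 0 ≤ h) :
    ‖(X h - Y h) - (X 0 - Y 0)‖ ≤ L * ‖X 0 - Y 0‖ * h := by
  have hL : 0 < L := hm.trans_le hmL
  have hgc : Continuous (gradient f) :=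
    (InnerProductSpace.toDual ℝ (Euc d)).symm.continuous.comp (fderiv_diff_aux hf).continuous
  set g : ℝ → Euc d := fun s => gradient f (X s) - gradient f (Y s) with hg
  have hgcont : Continuous g := (hgc.comp hX).sub (hgc.comp hY)
  set w : ℝ → Euc d := fun t => (X 0 - Y 0) - ∫ s in (0:ℝ)..t, g s with hw
  have hwd : ∀ t, HasDerivAt w (- g t) t := fun t => by
    simpa using (hgcont.integral_hasStrictDerivAt 0 t).hasDerivAt.const_sub (X 0 - Y 0)
  have hnd : ∀ t, HasDerivAt (fun t => ‖w t‖ ^ 2) (2 * inner ℝ (w t) (- g t)) t :=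
    fun t => (hwd t).norm_sq
  have hanti : AntitoneOn (fun t => ‖w t‖ ^ 2) (Set.Ici 0) := by
    apply antitoneOn_of_deriv_nonpos (convex_Ici 0)
      (fun t _ => (hnd t).continuousAt.continuousWithinAt)
      (fun t _ => (hnd t).differentiableAt.differentiableWithinAt)
    intro t ht
    rw [interior_Ici] at ht
    rw [(hnd t).deriv, inner_neg_right, show w t = X t - Y t from (heq t (le_of_lt ht)).symm]
    have := grad_mono_aux hm hf hHess (X t) (Y t)
    simp only [hg]
    linarith
  have hbound : ∀ t, 0 ≤ t → ‖X t - Y t‖ ≤ ‖X 0 - Y 0‖ := by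
    intro t ht
    have := hanti (Set.mem_Ici.2 le_rfl) (Set.mem_Ici.2 ht) ht
    simp only [hw] at this
    rw [← heq t ht, intervalIntegral.integral_same, sub_zero] at this
    exact le_of_sq_le_sq this (norm_nonneg _)
  rw [heq h hh, sub_sub_cancel_left, norm_neg]
  have := intervalIntegral.norm_integral_le_of_norm_le_const (a := 0) (b := h) (f := g)
    (C := L * ‖X 0 - Y 0‖) (by
      intro s hs
      rw [Set.uIoc_of_le hh] at hs
      exact (grad_lip_aux hm hmL hf hHess _ _).trans
        (mul_le_mul_of_nonneg_left (hbound s hs.1.le) hL.le))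
  simpa [abs_of_nonneg hh] using this

end Helpers

/-- **Bound on evolved deviation** (Lemma 4).
If `f` is `m`-strongly convex and `L`-smooth (`0 < m ≤ L`) and `X`, `Y` are two solutions of
the overdamped Langevin dynamics driven by the same Brownian motion with square-integrable
initial values, then for every `0 < h ≤ 1/(4κL)` (where `κ = L/m`), the deviation
`z = (X_h - Y_h) - (X_0 - Y_0)` satisfies `E‖z‖² ≤ (m/4) E‖X_0 - Y_0‖² h`. -/
theorem langevin_evolved_deviation_bound
    {d : ℕ} {Ω : Type*} {mΩ : MeasurableSpace Ω} {P : Measure Ω} [IsProbabilityMeasure P]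
    {ℱ : Filtration ℝ mΩ} {f : Euc d → ℝ} {m L : ℝ}
    (hm : 0 < m) (hmL : m ≤ L) (hf : ContDiff ℝ 2 f) (hHess : HessianBounds m L f)
    {B X Y : ℝ → Ω → Euc d} (hB : IsStdBrownian P ℱ B)
    (hX : IsLangevinSolution ℱ f B X) (hY : IsLangevinSolution ℱ f B Y)
    (hX0 : MemLp (X 0) 2 P) (hY0 : MemLp (Y 0) 2 P)
    {h : ℝ} (hh0 : 0 < h) (hh1 : h ≤ 1 / (4 * (L / m) * L)) :
    (∫⁻ ω, (‖(X h ω - Y h ω) - (X 0 ω - Y 0 ω)‖₊ : ℝ≥0∞) ^ 2 ∂P) ≤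
      ENNReal.ofReal (m / 4 * (∫ ω, ‖X 0 ω - Y 0 ω‖ ^ 2 ∂P) * h) := by
  have hL : 0 < L := hm.trans_le hmL
  have hgc : Continuous (gradient f) :=
    (InnerProductSpace.toDual ℝ (Euc d)).symm.continuous.comp (fderiv_diff_aux hf).continuous
  have hLh : L ^ 2 * h ≤ m / 4 := by
    have h1 : 1 / (4 * (L / m) * L) = m / 4 / L ^ 2 := by field_simp
    rw [h1, le_div_iff₀ (by positivity)] at hh1
    linarith
  have hpt : ∀ ω, (‖(X h ω - Y h ω) - (X 0 ω - Y 0 ω)‖₊ : ℝ≥0∞) ^ 2 ≤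
      ENNReal.ofReal (m / 4 * h * ‖X 0 ω - Y 0 ω‖ ^ 2) := by
    intro ω
    have hp := path_aux hm hmL hf hHess (fun t => X t ω) (fun t => Y t ω) (hX.cont ω) (hY.cont ω)
      (by
        intro t ht
        have hi1 : IntervalIntegrable (fun s => gradient f (X s ω)) volume 0 t :=
          (hgc.comp (hX.cont ω)).intervalIntegrable _ _
        have hi2 : IntervalIntegrable (fun s => gradient f (Y s ω)) volume 0 t :=
          (hgc.comp (hY.cont ω)).intervalIntegrable _ _
        rw [intervalIntegral.integral_sub hi1 hi2]
        rw [hX.eqn ω t ht, hY.eqn ω t ht]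
        abel) hh0.le
    rw [← ENNReal.ofReal_coe_nnreal, coe_nnnorm, ← ENNReal.ofReal_pow (norm_nonneg _)]
    apply ENNReal.ofReal_le_ofReal
    calc _ ≤ (L * ‖X 0 ω - Y 0 ω‖ * h) ^ 2 := pow_le_pow_left₀ (norm_nonneg _) hp 2
      _ = (L ^ 2 * h) * (h * ‖X 0 ω - Y 0 ω‖ ^ 2) := by ring
      _ ≤ m / 4 * (h * ‖X 0 ω - Y 0 ω‖ ^ 2) := mul_le_mul_of_nonneg_right hLh (by positivity)
      _ = _ := by ring
  have hint : Integrable (fun ω => ‖X 0 ω - Y 0 ω‖ ^ 2) P :=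
    (hX0.sub hY0).integrable_norm_pow (by norm_num)
  calc _ ≤ ∫⁻ ω, ENNReal.ofReal (m / 4 * h * ‖X 0 ω - Y 0 ω‖ ^ 2) ∂P := lintegral_mono hpt
    _ = ENNReal.ofReal (∫ ω, m / 4 * h * ‖X 0 ω - Y 0 ω‖ ^ 2 ∂P) :=
      (ofReal_integral_eq_lintegral_ofReal (hint.const_mul _)
        (Filter.Eventually.of_forall fun ω => by positivity)).symm
    _ = _ := by
      rw [integral_const_mul]
      congr 1
      ring
end

section
/- (Local strong error of LMC, Lemma 5) Let f : ℝ^d → ℝ be twice continuously differentiable with m·I ≼ ∇²f(x) ≼ L·I for all x (0 < m ≤ L), κ = L/m, and ∇f(0) = 0. Let (x_t) be a solution of the overdamped Langevin dynamics driven by a standard d-dimensional Brownian motion (B_t), with square-integrable initial value x, and let x̄₁ = x − h∇f(x) + √2·B_h be the one-step LMC update driven by the same Brownian increment. Then for every h with 0 ≤ h ≤ 1/(4κL): (E‖x̄₁ − x_h‖²)^{1/2} ≤ 2L (d + (m/2) E‖x‖²)^{1/2} · h^{3/2}. -/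
open MeasureTheory ProbabilityTheory Real
open scoped ENNReal NNReal

lemma aux_cs {φ : ℝ → ℝ} (hφ : Continuous φ) {t : ℝ} (ht : 0 ≤ t) :
    (∫ s in (0:ℝ)..t, φ s) ^ 2 ≤ t * ∫ s in (0:ℝ)..t, φ s ^ 2 := by
  rcases ht.eq_or_lt with rfl | ht'
  · simp
  set I := ∫ s in (0:ℝ)..t, φ s with hI
  have h1 : 0 ≤ ∫ s in (0:ℝ)..t, (φ s - I / t) ^ 2 :=
    intervalIntegral.integral_nonneg ht fun s _ => sq_nonneg _
  have h2 : ∫ s in (0:ℝ)..t, (φ s - I / t) ^ 2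
      = (∫ s in (0:ℝ)..t, φ s ^ 2) - 2 * (I / t) * I + t * (I / t) ^ 2 := by
    have : ∀ s, (φ s - I / t) ^ 2 = (φ s ^ 2 - 2 * (I / t) * φ s) + (I / t) ^ 2 := by
      intro s; ring
    simp_rw [this]
    rw [intervalIntegral.integral_add, intervalIntegral.integral_sub,
      intervalIntegral.integral_const_mul, intervalIntegral.integral_const]
    · simp [hI]
    all_goals exact Continuous.intervalIntegrable (by fun_prop) _ _
  rw [h2] at h1
  have h3 : t * ((∫ s in (0:ℝ)..t, φ s ^ 2) - 2 * (I / t) * I + t * (I / t) ^ 2)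
      = t * (∫ s in (0:ℝ)..t, φ s ^ 2) - I ^ 2 := by
    field_simp; ring
  have := mul_nonneg ht h1
  linarith

lemma aux_path {d : ℕ} {L h : ℝ} (hL : 0 ≤ L) (hh : 0 ≤ h) (hLh : L ^ 2 * h ^ 2 ≤ 1 / 16)
    {g : Euc d → Euc d} (hg : ∀ x y, ‖g x - g y‖ ≤ L * ‖x - y‖) (hgc : Continuous g)
    (g0 : g 0 = 0) {X B : ℝ → Euc d} (hX : Continuous X) (hB : Continuous B)
    (eqn : ∀ t : ℝ, 0 ≤ t → X t = X 0 - (∫ s in (0:ℝ)..t, g (X s)) + Real.sqrt 2 • B t) :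
    ‖(X 0 - h • g (X 0) + Real.sqrt 2 • B h) - X h‖ ^ 2 ≤
      L ^ 2 * h * (32 / 29 * (L ^ 2 * h ^ 3 * ‖X 0‖ ^ 2 + 6 * ∫ s in (0:ℝ)..h, ‖B s‖ ^ 2)) := by
  set φ : ℝ → ℝ := fun s => ‖X s - X 0‖ with hφ
  have hφc : Continuous φ := by fun_prop
  have hint : ∀ t, 0 ≤ t → ‖(∫ s in (0:ℝ)..t, g (X s)) - t • g (X 0)‖ ≤
      L * ∫ s in (0:ℝ)..t, φ s := by
    intro t ht
    have : (∫ s in (0:ℝ)..t, g (X s)) - t • g (X 0) = ∫ s in (0:ℝ)..t, (g (X s) - g (X 0)) := by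
      rw [intervalIntegral.integral_sub, intervalIntegral.integral_const]
      · simp
      all_goals exact Continuous.intervalIntegrable (by fun_prop) _ _
    rw [this, ← intervalIntegral.integral_const_mul]
    refine intervalIntegral.norm_integral_le_of_norm_le ht ?_ ?_
    · exact Filter.Eventually.of_forall fun s _ => hg _ _
    · exact Continuous.intervalIntegrable (by fun_prop) _ _
  set J := ∫ s in (0:ℝ)..h, φ s ^ 2 with hJ
  have hJmono : ∀ t, 0 ≤ t → t ≤ h → ∫ s in (0:ℝ)..t, φ s ^ 2 ≤ J := by
    intro t ht hth
    refine intervalIntegral.integral_mono_interval le_rfl ht hth ?_ ?_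
    · exact Filter.Eventually.of_forall fun s => sq_nonneg _
    · exact Continuous.intervalIntegrable (by fun_prop) _ _
  have hD : ∀ t ∈ Set.Icc 0 h, φ t ^ 2 ≤
      3 * (L ^ 2 * J) * t + 3 * (L ^ 2 * ‖X 0‖ ^ 2) * t ^ 2 + 6 * ‖B t‖ ^ 2 := by
    rintro t ⟨ht, hth⟩
    have e1 : X t - X 0 = -((∫ s in (0:ℝ)..t, g (X s)) - t • g (X 0)) + (-(t • g (X 0)))
        + Real.sqrt 2 • B t := by
      rw [eqn t ht]; abel
    have e2 : ‖g (X 0)‖ ≤ L * ‖X 0‖ := by simpa [g0] using hg (X 0) 0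
    have e3 : φ t ≤ L * (∫ s in (0:ℝ)..t, φ s) + t * (L * ‖X 0‖) + Real.sqrt 2 * ‖B t‖ := by
      simp only [hφ]
      rw [e1]
      refine (norm_add₃_le).trans ?_
      rw [norm_neg, norm_neg, norm_smul, norm_smul, Real.norm_of_nonneg ht,
        Real.norm_of_nonneg (Real.sqrt_nonneg 2)]
      have := hint t ht
      gcongr
    have e4 := (aux_cs hφc ht).trans (mul_le_mul_of_nonneg_left (hJmono t ht hth) ht)
    have e5 : φ t ^ 2 ≤ (L * (∫ s in (0:ℝ)..t, φ s) + t * (L * ‖X 0‖) + Real.sqrt 2 * ‖B t‖) ^ 2 :=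
      pow_le_pow_left₀ (norm_nonneg _) e3 2
    have e6 : ∀ a b c : ℝ, (a + b + c) ^ 2 ≤ 3 * a ^ 2 + 3 * b ^ 2 + 3 * c ^ 2 := by
      intro a b c; nlinarith [sq_nonneg (a - b), sq_nonneg (b - c), sq_nonneg (a - c)]
    have e7 := e5.trans (e6 _ _ _)
    have e8 : Real.sqrt 2 ^ 2 = 2 := Real.sq_sqrt (by norm_num)
    rw [mul_pow, mul_pow (Real.sqrt 2), e8] at e7
    have e9 := mul_le_mul_of_nonneg_left e4 (sq_nonneg L)
    nlinarith
  have hJ1 : J ≤ 3 * (L ^ 2 * J) * (h ^ 2 / 2) + 3 * (L ^ 2 * ‖X 0‖ ^ 2) * (h ^ 3 / 3)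
      + 6 * ∫ s in (0:ℝ)..h, ‖B s‖ ^ 2 := by
    have := intervalIntegral.integral_mono_on (μ := volume) hh
      (Continuous.intervalIntegrable (by fun_prop) _ _)
      (Continuous.intervalIntegrable (by fun_prop) _ _) hD
    refine this.trans (le_of_eq ?_)
    rw [intervalIntegral.integral_add, intervalIntegral.integral_add,
      intervalIntegral.integral_const_mul, intervalIntegral.integral_const_mul,
      intervalIntegral.integral_const_mul, integral_id, integral_pow]
    · norm_num
    all_goals exact Continuous.intervalIntegrable (by fun_prop) _ _
  have hJ0 : 0 ≤ J := intervalIntegral.integral_nonneg hh fun s _ => sq_nonneg _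
  have hJ2 : J ≤ 32 / 29 * (L ^ 2 * h ^ 3 * ‖X 0‖ ^ 2 + 6 * ∫ s in (0:ℝ)..h, ‖B s‖ ^ 2) := by
    have := mul_le_mul_of_nonneg_right hLh hJ0
    nlinarith
  have e1 : (X 0 - h • g (X 0) + Real.sqrt 2 • B h) - X h =
      (∫ s in (0:ℝ)..h, g (X s)) - h • g (X 0) := by
    rw [eqn h hh]; abel
  rw [e1]
  calc _ ≤ (L * ∫ s in (0:ℝ)..h, φ s) ^ 2 := pow_le_pow_left₀ (norm_nonneg _) (hint h hh) 2
    _ = L ^ 2 * (∫ s in (0:ℝ)..h, φ s) ^ 2 := by ring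
    _ ≤ L ^ 2 * (h * J) := by gcongr; exact aux_cs hφc hh
    _ = L ^ 2 * h * J := by ring
    _ ≤ _ := by gcongr

lemma aux_lip {d : ℕ} {m L : ℝ} {f : Euc d → ℝ} (hm : 0 < m) (hmL : m ≤ L) (hf : ContDiff ℝ 2 f)
    (hHess : HessianBounds m L f) (x y : Euc d) :
    ‖gradient f x - gradient f y‖ ≤ L * ‖x - y‖ := by
  have hL : 0 ≤ L := hm.le.trans hmL
  have e : gradient f x - gradient f y =
      (InnerProductSpace.toDual ℝ (Euc d)).symm (fderiv ℝ f x - fderiv ℝ f y) := by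
    simp [gradient]
  rw [e, LinearIsometryEquiv.norm_map]
  have hd : ContDiff ℝ 1 (fderiv ℝ f) := hf.fderiv_right (by norm_num)
  refine Convex.norm_image_sub_le_of_norm_fderiv_le (𝕜 := ℝ) (s := Set.univ) (f := fderiv ℝ f)
    (fun z _ => (hd.differentiable (by norm_num)) z) ?_ convex_univ (Set.mem_univ _) (Set.mem_univ _)
  intro z _
  have hsymm : IsSymmSndFDerivAt ℝ f z := hf.contDiffAt.isSymmSndFDerivAt (by simp)
  have hQ : ∀ v, m * ‖v‖ ^ 2 ≤ fderiv ℝ (fderiv ℝ f) z v v ∧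
      fderiv ℝ (fderiv ℝ f) z v v ≤ L * ‖v‖ ^ 2 := by
    intro v
    simpa [iteratedFDeriv_two_apply] using hHess z v
  refine ContinuousLinearMap.opNorm_le_bound _ hL fun u => ?_
  refine ContinuousLinearMap.opNorm_le_bound _ (by positivity) fun v => ?_
  set A := fderiv ℝ (fderiv ℝ f) z
  have hcs : (A u v) ^ 2 ≤ A u u * A v v := by
    have hs : A v u = A u v := hsymm v u
    have key : ∀ t : ℝ, 0 ≤ (A v v) * (t * t) + (2 * A u v) * t + A u u := by
      intro t
      have h1 : 0 ≤ A (u + t • v) (u + t • v) := le_trans (by positivity) (hQ _).1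
      have h2 : A (u + t • v) (u + t • v) = (A v v) * (t * t) + (2 * A u v) * t + A u u := by
        simp [hs]; ring
      linarith
    have := discrim_le_zero key
    unfold discrim at this
    nlinarith
  rw [Real.norm_eq_abs]
  refine abs_le_of_sq_le_sq ?_ (by positivity)
  have h1 := (hQ u).2
  have h2 := (hQ v).2
  have h3 : 0 ≤ A v v := le_trans (by positivity) (hQ v).1
  calc _ ≤ _ := hcs
    _ ≤ (L * ‖u‖ ^ 2) * (L * ‖v‖ ^ 2) := by gcongr
    _ = _ := by ring

lemma aux_gauss (d : ℕ) {s : ℝ} (hs : 0 ≤ s) :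
    ∫⁻ x, ENNReal.ofReal (‖x‖ ^ 2) ∂(isoGaussian d s) = ENNReal.ofReal (d * s) := by
  unfold isoGaussian _root_.stdGaussian
  rw [lintegral_map (by fun_prop) (by fun_prop), lintegral_map (by fun_prop) (by fun_prop)]
  have h1 : ∀ y : Fin d → ℝ, ENNReal.ofReal (‖√s • (EuclideanSpace.equiv (Fin d) ℝ).symm y‖ ^ 2)
      = ∑ i, ENNReal.ofReal (s * y i ^ 2) := by
    intro y
    rw [← ENNReal.ofReal_sum_of_nonneg (fun i _ => by positivity), norm_smul, mul_pow,
      EuclideanSpace.norm_sq_eq, Real.norm_of_nonneg (Real.sqrt_nonneg s), Real.sq_sqrt hs,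
      Finset.mul_sum]
    simp
  simp_rw [h1]
  rw [lintegral_finsetSum _ (fun i _ => by fun_prop)]
  have h2 : ∀ i : Fin d, ∫⁻ y, ENNReal.ofReal (s * y i ^ 2)
      ∂(Measure.pi fun _ : Fin d => gaussianReal 0 1) = ENNReal.ofReal s := by
    intro i
    have hmp := measurePreserving_eval (fun _ : Fin d => gaussianReal 0 1) i
    have := hmp.lintegral_comp (f := fun z : ℝ => ENNReal.ofReal (s * z ^ 2)) (by fun_prop)
    simp only [Function.eval] at this
    rw [this]
    have hi : Integrable (fun z : ℝ => z ^ 2) (gaussianReal 0 1) :=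
      (memLp_id_gaussianReal (μ := 0) (v := 1) 2).integrable_sq
    rw [← ofReal_integral_eq_lintegral_ofReal (hi.const_mul s)
      (Filter.Eventually.of_forall fun z => by positivity), integral_const_mul]
    have hv := variance_fun_id_gaussianReal (μ := 0) (v := 1)
    rw [variance_eq_integral (by fun_prop)] at hv
    simp [integral_id_gaussianReal] at hv
    rw [hv]; simp
  simp_rw [h2]
  rw [ENNReal.ofReal_mul (by positivity)]
  simp

lemma aux_BM {d : ℕ} {Ω : Type*} {mΩ : MeasurableSpace Ω} {P : Measure Ω} [IsProbabilityMeasure P]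
    {ℱ : Filtration ℝ mΩ} {B : ℝ → Ω → Euc d} (hB : IsStdBrownian P ℱ B) {h : ℝ} (hh : 0 ≤ h) :
    ∫⁻ ω, ENNReal.ofReal (∫ s in (0:ℝ)..h, ‖B s ω‖ ^ 2) ∂P = ENNReal.ofReal (d * (h ^ 2 / 2)) := by
  have hBm : ∀ t, Measurable (B t) := fun t => ((hB.adapted t).mono (ℱ.le t)).measurable
  have hj : Measurable (Function.uncurry B) :=
    measurable_uncurry_of_continuous_of_measurable hB.cont hBm
  have h1 : ∀ ω, ENNReal.ofReal (∫ s in (0:ℝ)..h, ‖B s ω‖ ^ 2) =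
      ∫⁻ s in Set.Ioc 0 h, ENNReal.ofReal (‖B s ω‖ ^ 2) := by
    intro ω
    have := hB.cont ω
    rw [intervalIntegral.integral_of_le hh, ofReal_integral_eq_lintegral_ofReal]
    · exact (Continuous.intervalIntegrable (by fun_prop) 0 h).1
    · exact Filter.Eventually.of_forall fun s => by positivity
  simp_rw [h1]
  rw [lintegral_lintegral_swap]
  swap
  · refine Measurable.aemeasurable ?_
    have : Measurable (fun p : Ω × ℝ => B p.2 p.1) := hj.comp measurable_swap
    exact (this.norm.pow_const 2).ennreal_ofReal
  have h2 : ∀ s ∈ Set.Ioc 0 h, ∫⁻ ω, ENNReal.ofReal (‖B s ω‖ ^ 2) ∂P = ENNReal.ofReal (d * s) := by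
    intro s hs
    have hl := hB.incr_law 0 s le_rfl hs.1.le
    simp only [hB.init, sub_zero] at hl
    rw [← aux_gauss d hs.1.le, ← hl, lintegral_map (by fun_prop) (hBm s)]
  rw [setLIntegral_congr_fun measurableSet_Ioc h2, ← ofReal_integral_eq_lintegral_ofReal,
    ← intervalIntegral.integral_of_le hh, intervalIntegral.integral_const_mul, integral_id]
  · simp
  · exact (Continuous.intervalIntegrable (by fun_prop) 0 h).1
  · refine (ae_restrict_iff' measurableSet_Ioc).2 (Filter.Eventually.of_forall fun s hs => ?_)
    have := hs.1.le
    simp only [Pi.zero_apply]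
    positivity

/-- **Local strong error of LMC** (Lemma 5).
If `f` is `m`-strongly convex and `L`-smooth (`0 < m ≤ L`), `∇f(0) = 0`, `X` solves the
overdamped Langevin dynamics with square-integrable initial value `x = X_0`, and
`x̄₁ = x - h ∇f(x) + √2 B_h` is the one-step LMC update driven by the same Brownian increment,
then for every `0 ≤ h ≤ 1/(4κL)` (where `κ = L/m`):
`(E‖x̄₁ - X_h‖²)^{1/2} ≤ 2L (d + (m/2) E‖x‖²)^{1/2} h^{3/2}`. -/
theorem lmc_local_strong_error
    {d : ℕ} {Ω : Type*} {mΩ : MeasurableSpace Ω} {P : Measure Ω} [IsProbabilityMeasure P]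
    {ℱ : Filtration ℝ mΩ} {f : Euc d → ℝ} {m L : ℝ}
    (hm : 0 < m) (hmL : m ≤ L) (hf : ContDiff ℝ 2 f) (hHess : HessianBounds m L f)
    (hgrad0 : gradient f 0 = 0)
    {B X : ℝ → Ω → Euc d} (hB : IsStdBrownian P ℱ B)
    (hX : IsLangevinSolution ℱ f B X) (hX0 : MemLp (X 0) 2 P)
    {h : ℝ} (hh0 : 0 ≤ h) (hh1 : h ≤ 1 / (4 * (L / m) * L)) :
    (∫⁻ ω, (‖(X 0 ω - h • gradient f (X 0 ω) + Real.sqrt 2 • B h ω) - X h ω‖₊ : ℝ≥0∞) ^ 2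
        ∂P) ^ (1/2 : ℝ) ≤
      ENNReal.ofReal
        (2 * L * Real.sqrt (d + m / 2 * ∫ ω, ‖X 0 ω‖ ^ 2 ∂P) * h ^ ((3:ℝ)/2)) := by
  have hL : 0 < L := hm.trans_le hmL
  have hhm : L ^ 2 * h ≤ m / 4 := by
    have e : 1 / (4 * (L / m) * L) = m / 4 / L ^ 2 := by field_simp
    rw [e, le_div_iff₀ (by positivity)] at hh1
    linarith
  have hLh : L ^ 2 * h ^ 2 ≤ 1 / 16 := by
    have h1 : L * (L * h) ≤ L * (1 / 4) := by nlinarith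
    have h2 : L * h ≤ 1 / 4 := le_of_mul_le_mul_left h1 hL
    have h3 : 0 ≤ L * h := by positivity
    nlinarith
  have hlip := aux_lip hm hmL hf hHess
  have hgc : Continuous (gradient f) :=
    (LipschitzWith.of_dist_le_mul (K := ⟨L, hL.le⟩) fun x y => by
      rw [dist_eq_norm, dist_eq_norm]; exact hlip x y).continuous
  have hBm : ∀ t, Measurable (B t) := fun t => ((hB.adapted t).mono (ℱ.le t)).measurable
  set a := ∫ ω, ‖X 0 ω‖ ^ 2 ∂P with ha
  have ha0 : 0 ≤ a := integral_nonneg fun ω => sq_nonneg _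
  have hXint : Integrable (fun ω => ‖X 0 ω‖ ^ 2) P := hX0.integrable_norm_pow (by norm_num)
  have hX2 : ∫⁻ ω, ENNReal.ofReal (‖X 0 ω‖ ^ 2) ∂P = ENNReal.ofReal a :=
    (ofReal_integral_eq_lintegral_ofReal hXint
      (Filter.Eventually.of_forall fun ω => sq_nonneg _)).symm
  have main : ∫⁻ ω, (‖(X 0 ω - h • gradient f (X 0 ω) + Real.sqrt 2 • B h ω) - X h ω‖₊ : ℝ≥0∞) ^ 2
        ∂P ≤ ENNReal.ofReal ((2 * L * Real.sqrt (d + m / 2 * a) * h ^ ((3:ℝ)/2)) ^ 2) := by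
    set c1 := L ^ 2 * h * (32 / 29) * (L ^ 2 * h ^ 3) with hc1
    set c2 := L ^ 2 * h * (32 / 29) * 6 with hc2
    have hc1' : 0 ≤ c1 := by positivity
    have hc2' : 0 ≤ c2 := by positivity
    calc _ ≤ ∫⁻ ω, (ENNReal.ofReal c1 * ENNReal.ofReal (‖X 0 ω‖ ^ 2) +
            ENNReal.ofReal c2 * ENNReal.ofReal (∫ s in (0:ℝ)..h, ‖B s ω‖ ^ 2)) ∂P := by
          refine lintegral_mono fun ω => ?_
          have hp := aux_path hL.le hh0 hLh hlip hgc hgrad0 (hX.cont ω) (hB.cont ω) (hX.eqn ω)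
          have hI : 0 ≤ ∫ s in (0:ℝ)..h, ‖B s ω‖ ^ 2 :=
            intervalIntegral.integral_nonneg hh0 fun s _ => sq_nonneg _
          rw [← ENNReal.ofReal_mul hc1', ← ENNReal.ofReal_mul hc2',
            ← ENNReal.ofReal_add (by positivity) (by positivity)]
          rw [← enorm_eq_nnnorm, ← ofReal_norm_eq_enorm, ← ENNReal.ofReal_pow (norm_nonneg _)]
          refine ENNReal.ofReal_le_ofReal (hp.trans (le_of_eq ?_))
          rw [hc1, hc2]; ring
      _ = ENNReal.ofReal c1 * ENNReal.ofReal a + ENNReal.ofReal c2 *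
            ENNReal.ofReal (d * (h ^ 2 / 2)) := by
          rw [lintegral_add_left', lintegral_const_mul' _ _ ENNReal.ofReal_ne_top,
            lintegral_const_mul' _ _ ENNReal.ofReal_ne_top, hX2, aux_BM hB hh0]
          exact (hXint.aemeasurable.ennreal_ofReal).const_mul _
      _ = ENNReal.ofReal (c1 * a + c2 * (d * (h ^ 2 / 2))) := by
          rw [← ENNReal.ofReal_mul hc1', ← ENNReal.ofReal_mul hc2',
            ← ENNReal.ofReal_add (by positivity) (by positivity)]
      _ ≤ _ := by
          refine ENNReal.ofReal_le_ofReal ?_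
          have e1 : (h ^ ((3:ℝ)/2)) ^ 2 = h ^ 3 := by
            rw [← Real.rpow_natCast, ← Real.rpow_mul hh0, ← Real.rpow_natCast]; norm_num
          rw [mul_pow, e1, mul_pow, Real.sq_sqrt (by positivity), hc1, hc2]
          have e2 : L ^ 2 * h ^ 3 * ((L ^ 2 * h) * a) ≤ L ^ 2 * h ^ 3 * (m / 4 * a) := by gcongr
          have e3 : 0 ≤ L ^ 2 * h ^ 3 * (m * a) := by positivity
          have e4 : 0 ≤ L ^ 2 * h ^ 3 * (d : ℝ) := by positivity
          nlinarith
  refine (ENNReal.rpow_le_rpow main (by norm_num)).trans (le_of_eq ?_)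
  rw [ENNReal.ofReal_rpow_of_nonneg (by positivity) (by norm_num), ← Real.sqrt_eq_rpow,
    Real.sqrt_sq (by positivity)]
end

section
/- (Local weak error of LMC, Lemma 6) Let f : ℝ^d → ℝ be three times continuously differentiable with m·I ≼ ∇²f(x) ≼ L·I for all x (0 < m ≤ L), κ = L/m, ∇f(0) = 0, and suppose ‖∇(Δf)(x)‖ ≤ G(1+‖x‖) for all x for some G > 0. Let (x_t) be a solution of the overdamped Langevin dynamics driven by a standard d-dimensional Brownian motion (B_t), with square-integrable initial value x, and let x̄₁ = x − h∇f(x) + √2·B_h be the one-step LMC update driven by the same Brownian increment. Then for every h with 0 ≤ h ≤ 1/(4κL): ‖E[x̄₁] − E[x_h]‖ ≤ 2(L² + G) (d/(4κL) + E‖x‖² + 1)^{1/2} · h². -/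
open MeasureTheory ProbabilityTheory Real
open scoped ENNReal NNReal

/-- The Laplacian of `f : ℝ^d → ℝ`, i.e. the trace of its Hessian, expressed via the
second iterated Fréchet derivative evaluated on the standard basis. -/
noncomputable def lapl {d : ℕ} (f : Euc d → ℝ) (x : Euc d) : ℝ :=
  ∑ i : Fin d,
    iteratedFDeriv ℝ 2 f x ![EuclideanSpace.single i (1:ℝ), EuclideanSpace.single i (1:ℝ)]


section GaussAux

/-- Normalised Gaussian density. -/
noncomputable def gdens (d : ℕ) (x : Euc d) : ℝ :=
  ((2 * π) ^ ((d : ℝ) / 2))⁻¹ * Real.exp (-(1/2) * ‖x‖ ^ 2)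

lemma gdens_nonneg {d : ℕ} (x : Euc d) : 0 ≤ gdens d x := by unfold gdens; positivity

lemma gdens_contDiff (d : ℕ) : ContDiff ℝ 1 (gdens d) := by
  unfold gdens
  exact contDiff_const.mul ((contDiff_const.mul (contDiff_norm_sq ℝ)).exp)

lemma gdens_fderiv {d : ℕ} (x v : Euc d) :
    fderiv ℝ (gdens d) x v = - inner ℝ x v * gdens d x := by
  have h1 : HasFDerivAt (fun x : Euc d => ‖x‖ ^ 2) (2 • (innerSL ℝ x)) x :=
    (hasStrictFDerivAt_norm_sq x).hasFDerivAt
  have h2 := ((h1.const_mul (-(1/2):ℝ)).exp).const_mul (((2 * π) ^ ((d : ℝ) / 2))⁻¹)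
  have h3 : HasFDerivAt (gdens d) _ x := h2
  rw [h3.fderiv]
  simp [gdens]
  ring

lemma gdens_integrable (d : ℕ) : Integrable (gdens d) := by
  unfold gdens
  apply Integrable.const_mul
  have := (GaussianFourier.integrable_cexp_neg_mul_sq_norm_add (b := (1/2 : ℂ)) (by norm_num) 0 (0 : Euc d)).norm
  refine this.congr (Filter.Eventually.of_forall fun x => ?_)
  simp only [Complex.norm_exp]
  simp [← Complex.ofReal_pow]

lemma stdGaussian_eq_withDensity (d : ℕ) :
    ProbabilityTheory.stdGaussian (Euc d) =
      (volume : Measure (Euc d)).withDensity (fun x => ENNReal.ofReal (gdens d x)) := by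
  have := isFiniteMeasure_withDensity_ofReal (gdens_integrable d).2
  apply Measure.ext_of_charFun
  ext t
  rw [charFun_stdGaussian, charFun_apply, integral_withDensity_eq_integral_toReal_smul
    (by have := (gdens_contDiff d).continuous.measurable; fun_prop) (by simp)]
  have h := GaussianFourier.integral_cexp_neg_mul_sq_norm_add (b := (1/2 : ℂ)) (by norm_num)
    Complex.I t
  have h2 : ∀ x : Euc d, (ENNReal.ofReal (gdens d x)).toReal •
      Complex.exp ((inner ℝ x t : ℝ) * Complex.I) = (((2 * π) ^ ((d : ℝ) / 2))⁻¹ : ℝ) *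
        Complex.exp (-(1/2) * ‖x‖ ^ 2 + Complex.I * (inner ℝ t x : ℝ)) := by
    intro x
    rw [ENNReal.toReal_ofReal (gdens_nonneg x), Complex.exp_add, gdens, real_inner_comm]
    simp only [Complex.real_smul]
    push_cast
    rw [mul_comm Complex.I]
    ring
  simp_rw [h2]
  rw [integral_const_mul, h]
  have h3 : (π / (1/2) : ℂ) ^ ((Module.finrank ℝ (Euc d) : ℂ) / 2) =
      (((2 * π) ^ ((d : ℝ) / 2) : ℝ) : ℂ) := by
    rw [Complex.ofReal_cpow (by positivity)]
    simp
    ring_nf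
  rw [h3, ← mul_assoc, ← Complex.ofReal_mul, inv_mul_cancel₀ (by positivity)]
  simp
  ring_nf

lemma integral_stdGaussian {d : ℕ} (g : Euc d → ℝ) :
    ∫ x, g x ∂(ProbabilityTheory.stdGaussian (Euc d)) = ∫ x, gdens d x * g x := by
  rw [stdGaussian_eq_withDensity, integral_withDensity_eq_integral_toReal_smul
    (by have := (gdens_contDiff d).continuous.measurable; fun_prop) (by simp)]
  simp [ENNReal.toReal_ofReal, gdens_nonneg]

lemma stein_cs {d : ℕ} {ψ : Euc d → ℝ} (hψ : ContDiff ℝ 1 ψ) (hc : HasCompactSupport ψ)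
    (v : Euc d) :
    ∫ z, inner ℝ z v * ψ z ∂(ProbabilityTheory.stdGaussian (Euc d)) =
      ∫ z, fderiv ℝ ψ z v ∂(ProbabilityTheory.stdGaussian (Euc d)) := by
  rw [integral_stdGaussian, integral_stdGaussian]
  have hd : Continuous fun z => fderiv ℝ ψ z v :=
    (hψ.continuous_fderiv (by norm_num)).clm_apply continuous_const
  have hgd : Continuous fun z => fderiv ℝ (gdens d) z v :=
    ((gdens_contDiff d).continuous_fderiv (by norm_num)).clm_apply continuous_const
  have hgc := (gdens_contDiff d).continuous
  have hcd : HasCompactSupport fun z => fderiv ℝ ψ z v := hc.fderiv_apply ℝ v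
  rw [integral_mul_fderiv_eq_neg_fderiv_mul_of_integrable (f := gdens d) (g := ψ)]
  · rw [← integral_neg]
    congr 1; ext z
    rw [gdens_fderiv]; ring
  · exact (hgd.mul hψ.continuous).integrable_of_hasCompactSupport hc.mul_left
  · exact (hgc.mul hd).integrable_of_hasCompactSupport hcd.mul_left
  · exact (hgc.mul hψ.continuous).integrable_of_hasCompactSupport hc.mul_left
  · intro x _; exact (gdens_contDiff d).differentiable (by norm_num) x
  · intro x _; exact hψ.differentiable (by norm_num) x

end GaussAux

section SteinDiv

open Filter Topology

lemma stein_div {d : ℕ} {F : Fin d → Euc d → ℝ} (hF : ∀ i, ContDiff ℝ 1 (F i)) {C K : ℝ}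
    (hb : ∀ i z, |F i z| ≤ C)
    (hdiv : ∀ z, |∑ i, fderiv ℝ (F i) z (EuclideanSpace.single i (1:ℝ))| ≤ K * (1 + ‖z‖)) :
    ∫ z, ∑ i, inner ℝ z (EuclideanSpace.single i (1:ℝ)) * F i z
        ∂(ProbabilityTheory.stdGaussian (Euc d)) =
      ∫ z, ∑ i, fderiv ℝ (F i) z (EuclideanSpace.single i (1:ℝ))
        ∂(ProbabilityTheory.stdGaussian (Euc d)) := by
  set γ := ProbabilityTheory.stdGaussian (Euc d) with hγ
  let χ : ContDiffBump (0 : Euc d) := ⟨1, 2, by norm_num, by norm_num⟩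
  let r : ℕ → ℝ := fun n => ((n : ℝ) + 1)⁻¹
  have hr0 : ∀ n, 0 < r n := fun n => by simp only [r]; positivity
  have hr1 : ∀ n, r n ≤ 1 := fun n => by
    simp only [r]; exact inv_le_one_of_one_le₀ (by linarith [Nat.cast_nonneg (α := ℝ) n])
  have hrt : Tendsto r atTop (𝓝 0) := by
    simpa [r, one_div] using tendsto_one_div_add_atTop_nhds_zero_nat (𝕜 := ℝ)
  let c : ℕ → Euc d → ℝ := fun n z => χ (r n • z)
  have hχc : ContDiff ℝ 1 (χ : Euc d → ℝ) := χ.contDiff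
  have hcc : ∀ n, ContDiff ℝ 1 (c n) := fun n => hχc.comp (contDiff_const_smul (r n))
  have hcs : ∀ n, HasCompactSupport (c n) := fun n =>
    χ.hasCompactSupport.comp_homeomorph (Homeomorph.smulOfNeZero (r n) (hr0 n).ne')
  have hcd : ∀ n z v, fderiv ℝ (c n) z v = r n * fderiv ℝ (χ : Euc d → ℝ) (r n • z) v := by
    intro n z v
    have h1 : HasFDerivAt (χ : Euc d → ℝ) _ (r n • z) :=
      (hχc.differentiable (by norm_num) (r n • z)).hasFDerivAt
    have h2 : HasFDerivAt (fun z : Euc d => r n • z) _ z :=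
      (hasFDerivAt_id (𝕜 := ℝ) z).const_smul (r n)
    have h3 : HasFDerivAt (c n) _ z := h1.comp z h2
    rw [h3.fderiv]
    simp
  obtain ⟨M, hM⟩ := (hχc.continuous_fderiv (by norm_num)).bounded_above_of_compact_support
    (χ.hasCompactSupport.fderiv ℝ)
  have hM0 : 0 ≤ M := (norm_nonneg _).trans (hM 0)
  have hC0 : ∀ i : Fin d, 0 ≤ C := fun i => (abs_nonneg _).trans (hb i 0)
  have hcd' : ∀ n z i, |fderiv ℝ (c n) z (EuclideanSpace.single i (1:ℝ))| ≤ r n * M := by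
    intro n z i
    rw [hcd, abs_mul, abs_of_pos (hr0 n)]
    refine mul_le_mul_of_nonneg_left ?_ (hr0 n).le
    refine ((fderiv ℝ (χ : Euc d → ℝ) (r n • z)).le_opNorm _).trans ?_
    simpa using hM _
  have hc0 : ∀ n z, 0 ≤ c n z := fun n z => χ.nonneg
  have hc1 : ∀ n z, c n z ≤ 1 := fun n z => χ.le_one
  have hct : ∀ z, Tendsto (fun n => c n z) atTop (𝓝 1) := by
    intro z
    have h1 : Tendsto (fun n => r n • z) atTop (𝓝 0) := by
      simpa using hrt.smul_const z
    have h2 := (hχc.continuous.tendsto 0).comp h1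
    have h3 : χ (0 : Euc d) = 1 := χ.one_of_mem_closedBall (by simp [χ])
    rw [h3] at h2
    exact h2
  have hnorm : Integrable (fun z : Euc d => ‖z‖) γ := IsGaussian.integrable_id.norm
  have hprod : ∀ i n z, fderiv ℝ (fun z => c n z * F i z) z (EuclideanSpace.single i (1:ℝ)) =
      c n z * fderiv ℝ (F i) z (EuclideanSpace.single i (1:ℝ)) +
        F i z * fderiv ℝ (c n) z (EuclideanSpace.single i (1:ℝ)) := by
    intro i n z
    rw [fderiv_fun_mul ((hcc n).differentiable (by norm_num) z)
      ((hF i).differentiable (by norm_num) z)]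
    simp
  have key : ∀ n, ∫ z, c n z * ∑ i, inner ℝ z (EuclideanSpace.single i (1:ℝ)) * F i z ∂γ =
      ∫ z, (c n z * ∑ i, fderiv ℝ (F i) z (EuclideanSpace.single i (1:ℝ)) +
        ∑ i, F i z * fderiv ℝ (c n) z (EuclideanSpace.single i (1:ℝ))) ∂γ := by
    intro n
    have e1 : ∀ z, c n z * ∑ i, inner ℝ z (EuclideanSpace.single i (1:ℝ)) * F i z =
        ∑ i, inner ℝ z (EuclideanSpace.single i (1:ℝ)) * (c n z * F i z) := by
      intro z; rw [Finset.mul_sum]; congr 1; ext i; ring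
    have e2 : ∀ z, (c n z * ∑ i, fderiv ℝ (F i) z (EuclideanSpace.single i (1:ℝ)) +
        ∑ i, F i z * fderiv ℝ (c n) z (EuclideanSpace.single i (1:ℝ))) =
        ∑ i, fderiv ℝ (fun z => c n z * F i z) z (EuclideanSpace.single i (1:ℝ)) := by
      intro z; rw [Finset.mul_sum, ← Finset.sum_add_distrib]; congr 1; ext i; rw [hprod]
    simp_rw [e1, e2]
    have hC1 : ∀ i, ContDiff ℝ 1 (fun z => c n z * F i z) := fun i => (hcc n).mul (hF i)
    have hC2 : ∀ i, HasCompactSupport (fun z => c n z * F i z) := fun i => (hcs n).mul_right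
    rw [integral_finsetSum, integral_finsetSum]
    · congr 1; ext i
      exact stein_cs (hC1 i) (hC2 i) _
    · intro i _
      exact (((hC1 i).continuous_fderiv (by norm_num)).clm_apply
        continuous_const).integrable_of_hasCompactSupport ((hC2 i).fderiv_apply ℝ _)
    · intro i _
      exact ((continuous_id.inner continuous_const).mul
        (hC1 i).continuous).integrable_of_hasCompactSupport (hC2 i).mul_left
  have hdc : Continuous fun z => ∑ i, fderiv ℝ (F i) z (EuclideanSpace.single i (1:ℝ)) :=
    continuous_finsetSum _ fun i _ =>
      ((hF i).continuous_fderiv (by norm_num)).clm_apply continuous_const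
  have hlc : Continuous fun z : Euc d => ∑ i, inner ℝ z (EuclideanSpace.single i (1:ℝ)) * F i z :=
    continuous_finsetSum _ fun i _ =>
      (continuous_id.inner continuous_const).mul (hF i).continuous
  have hec : ∀ n, Continuous fun z =>
      ∑ i, F i z * fderiv ℝ (c n) z (EuclideanSpace.single i (1:ℝ)) := fun n =>
    continuous_finsetSum _ fun i _ => (hF i).continuous.mul
      (((hcc n).continuous_fderiv (by norm_num)).clm_apply continuous_const)
  have heb : ∀ n z, |∑ i, F i z * fderiv ℝ (c n) z (EuclideanSpace.single i (1:ℝ))| ≤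
      r n * (d * (C * M)) := by
    intro n z
    refine (Finset.abs_sum_le_sum_abs _ _).trans ?_
    have : ∀ i ∈ (Finset.univ : Finset (Fin d)),
        |F i z * fderiv ℝ (c n) z (EuclideanSpace.single i (1:ℝ))| ≤ r n * (C * M) := by
      intro i _
      rw [abs_mul]
      calc _ ≤ C * (r n * M) := mul_le_mul (hb i z) (hcd' n z i) (abs_nonneg _) (hC0 i)
        _ = _ := by ring
    refine (Finset.sum_le_sum this).trans ?_
    simp
    apply le_of_eq; ring
  have lim1 : Tendsto (fun n => ∫ z, c n z *
      ∑ i, inner ℝ z (EuclideanSpace.single i (1:ℝ)) * F i z ∂γ) atTop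
      (𝓝 (∫ z, ∑ i, inner ℝ z (EuclideanSpace.single i (1:ℝ)) * F i z ∂γ)) := by
    refine tendsto_integral_of_dominated_convergence (fun z => ‖z‖ * (d * C))
      (fun n => ((hcc n).continuous.mul hlc).aestronglyMeasurable)
      (hnorm.mul_const _) (fun n => Eventually.of_forall fun z => ?_)
      (Eventually.of_forall fun z => ?_)
    · rw [Real.norm_eq_abs, abs_mul, abs_of_nonneg (hc0 n z)]
      refine (mul_le_of_le_one_left (abs_nonneg _) (hc1 n z)).trans ?_
      refine (Finset.abs_sum_le_sum_abs _ _).trans ?_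
      have : ∀ i ∈ (Finset.univ : Finset (Fin d)),
        |inner ℝ z (EuclideanSpace.single i (1:ℝ)) * F i z| ≤ ‖z‖ * C := by
        intro i _
        rw [abs_mul]
        refine mul_le_mul ?_ (hb i z) (abs_nonneg _) (norm_nonneg _)
        simpa using abs_real_inner_le_norm z (EuclideanSpace.single i (1:ℝ))
      refine (Finset.sum_le_sum this).trans ?_
      simp
      apply le_of_eq; ring
    · simpa using (hct z).mul_const (∑ i, inner ℝ z (EuclideanSpace.single i (1:ℝ)) * F i z)
  have lim2 : Tendsto (fun n => ∫ z,
      (c n z * ∑ i, fderiv ℝ (F i) z (EuclideanSpace.single i (1:ℝ)) +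
        ∑ i, F i z * fderiv ℝ (c n) z (EuclideanSpace.single i (1:ℝ))) ∂γ) atTop
      (𝓝 (∫ z, ∑ i, fderiv ℝ (F i) z (EuclideanSpace.single i (1:ℝ)) ∂γ)) := by
    refine tendsto_integral_of_dominated_convergence
      (fun z => K * (1 + ‖z‖) + |d * (C * M)|)
      (fun n => (((hcc n).continuous.mul hdc).add (hec n)).aestronglyMeasurable)
      ((((integrable_const _).add hnorm).const_mul K).add (integrable_const _))
      (fun n => Eventually.of_forall fun z => ?_)
      (Eventually.of_forall fun z => ?_)
    · rw [Real.norm_eq_abs]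
      refine (abs_add_le _ _).trans (add_le_add ?_ ?_)
      · rw [abs_mul, abs_of_nonneg (hc0 n z)]
        exact (mul_le_of_le_one_left (abs_nonneg _) (hc1 n z)).trans (hdiv z)
      · refine (heb n z).trans ?_
        refine (mul_le_mul_of_nonneg_left (le_abs_self _) (hr0 n).le).trans ?_
        exact mul_le_of_le_one_left (abs_nonneg _) (hr1 n)
    · have h1 := (hct z).mul_const (∑ i, fderiv ℝ (F i) z (EuclideanSpace.single i (1:ℝ)))
      have h2 : Tendsto (fun n => ∑ i, F i z * fderiv ℝ (c n) z (EuclideanSpace.single i (1:ℝ)))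
          atTop (𝓝 0) := by
        refine squeeze_zero_norm (fun n => heb n z) ?_
        simpa using hrt.mul_const (d * (C * M))
      simpa using h1.add h2
  simp_rw [key] at lim1
  exact tendsto_nhds_unique lim1 lim2

end SteinDiv

section Heat

open Filter Topology

lemma mean_norm_sq_le {Ω F : Type*} [NormedAddCommGroup F] {mΩ : MeasurableSpace Ω}
    {μ : Measure Ω} [IsProbabilityMeasure μ] {g : Ω → F} (hg : MemLp g 2 μ) :
    (∫ ω, ‖g ω‖ ∂μ) ^ 2 ≤ ∫ ω, ‖g ω‖ ^ 2 ∂μ := by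
  have h1 := variance_eq_sub hg.norm
  have h2 := variance_nonneg (fun ω => ‖g ω‖) μ
  simp only [Pi.pow_apply] at h1
  linarith

lemma stdGaussian_norm_sq (d : ℕ) :
    ∫ z, ‖z‖ ^ 2 ∂(ProbabilityTheory.stdGaussian (Euc d)) = d := by
  have h2 : MemLp id 2 (ProbabilityTheory.stdGaussian (Euc d)) := IsGaussian.memLp_two_id
  have hc : ∀ i : Fin d, MemLp (fun z : Euc d => z i) 2 (ProbabilityTheory.stdGaussian (Euc d)) :=
    fun i => (EuclideanSpace.proj (𝕜 := ℝ) i).comp_memLp' h2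
  simp_rw [EuclideanSpace.norm_sq_eq]
  rw [integral_finsetSum _ (fun i _ => by simpa using (hc i).integrable_sq)]
  have : ∀ i : Fin d, ∫ z : Euc d, ‖z i‖ ^ 2 ∂(ProbabilityTheory.stdGaussian (Euc d)) = 1 := by
    intro i
    have h3 := variance_dual_stdGaussian (innerSL ℝ (EuclideanSpace.single i (1:ℝ) : Euc d))
    rw [variance_of_integral_eq_zero (by fun_prop) (integral_strongDual_stdGaussian _)] at h3
    simpa [EuclideanSpace.inner_single_left] using h3
  simp_rw [this]
  simp

lemma stdGaussian_norm_le (d : ℕ) :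
    ∫ z, ‖z‖ ∂(ProbabilityTheory.stdGaussian (Euc d)) ≤ Real.sqrt d := by
  apply Real.le_sqrt_of_sq_le
  rw [← stdGaussian_norm_sq d]
  exact mean_norm_sq_le (g := id) (μ := ProbabilityTheory.stdGaussian (Euc d))
    IsGaussian.memLp_two_id

lemma heat_bound {d : ℕ} {φ : Euc d → ℝ} (hφ : ContDiff ℝ 2 φ) {A K : ℝ}
    (hA : ∀ x, ‖fderiv ℝ φ x‖ ≤ A)
    (hK : ∀ y, |∑ i, fderiv ℝ (fun y => fderiv ℝ φ y (EuclideanSpace.single i (1:ℝ))) y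
      (EuclideanSpace.single i (1:ℝ))| ≤ K * (1 + ‖y‖)) (x : Euc d) {T : ℝ} (hT : 0 ≤ T) :
    |(∫ z, φ (x + T • z) ∂(ProbabilityTheory.stdGaussian (Euc d))) - φ x| ≤
      K * (1 + ‖x‖ + T * Real.sqrt d) * T ^ 2 / 2 := by
  set γ := ProbabilityTheory.stdGaussian (Euc d) with hγ
  have hK0 : 0 ≤ K := by
    have := (abs_nonneg _).trans (hK 0)
    simpa using this
  have hnorm : Integrable (fun z : Euc d => ‖z‖) γ := IsGaussian.integrable_id.norm
  have hdf : Differentiable ℝ φ := hφ.differentiable (by norm_num)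
  have hdc : Continuous (fderiv ℝ φ) := hφ.continuous_fderiv (by norm_num)
  have hlip : ∀ y, ‖φ y - φ x‖ ≤ A * ‖y - x‖ := fun y =>
    convex_univ.norm_image_sub_le_of_norm_fderiv_le (fun y _ => hdf y) (fun y _ => hA y)
      (Set.mem_univ x) (Set.mem_univ y)
  have hint : ∀ τ : ℝ, Integrable (fun z => φ (x + τ • z)) γ := by
    intro τ
    refine Integrable.mono' ((hnorm.const_mul (A * |τ|)).add (integrable_const |φ x|))
      (hdf.continuous.comp (by fun_prop)).aestronglyMeasurable (Eventually.of_forall fun z => ?_)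
    have h1 := hlip (x + τ • z)
    have h2 : φ (x + τ • z) = (φ (x + τ • z) - φ x) + φ x := by ring
    rw [h2]
    refine (norm_add_le _ _).trans (add_le_add ?_ le_rfl)
    simpa [norm_smul, mul_assoc] using h1
  have hder : ∀ τ : ℝ, HasDerivAt (fun τ : ℝ => ∫ z, φ (x + τ • z) ∂γ)
      (∫ z, fderiv ℝ φ (x + τ • z) z ∂γ) τ := by
    intro τ
    refine (hasDerivAt_integral_of_dominated_loc_of_deriv_le (bound := fun z => A * ‖z‖)
      (F' := fun τ z => fderiv ℝ φ (x + τ • z) z)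
      (s := Set.univ) Filter.univ_mem (Eventually.of_forall fun τ => (hint τ).1) (hint τ)
      ?_ (Eventually.of_forall fun z τ _ => ?_) (hnorm.const_mul A)
      (Eventually.of_forall fun z τ _ => ?_)).2
    · exact (Continuous.clm_apply (hdc.comp (by fun_prop)) continuous_id).aestronglyMeasurable
    · exact ((fderiv ℝ φ (x + τ • z)).le_opNorm z).trans
        (mul_le_mul_of_nonneg_right (hA _) (norm_nonneg _))
    · have h1 : HasDerivAt (fun τ : ℝ => x + τ • z) z τ := by
        simpa using ((hasDerivAt_id τ).smul_const z).const_add x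
      exact (hdf (x + τ • z)).hasFDerivAt.comp_hasDerivAt τ h1
  have hDi : ∀ i : Fin d, ContDiff ℝ 1
      (fun y => fderiv ℝ φ y (EuclideanSpace.single i (1:ℝ))) := fun i =>
    (hφ.fderiv_right (m := 1) (by norm_num)).clm_apply contDiff_const
  have hval : ∀ τ : ℝ, 0 ≤ τ → |∫ z, fderiv ℝ φ (x + τ • z) z ∂γ| ≤
      τ * (K * (1 + ‖x‖ + τ * Real.sqrt d)) := by
    intro τ hτ
    let F : Fin d → Euc d → ℝ := fun i z =>
      fderiv ℝ φ (x + τ • z) (EuclideanSpace.single i (1:ℝ))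
    have hF : ∀ i, ContDiff ℝ 1 (F i) := fun i =>
      (hDi i).comp (contDiff_const.add (contDiff_const_smul τ))
    have hFd : ∀ i z, fderiv ℝ (F i) z (EuclideanSpace.single i (1:ℝ)) =
        τ * fderiv ℝ (fun y => fderiv ℝ φ y (EuclideanSpace.single i (1:ℝ))) (x + τ • z)
          (EuclideanSpace.single i (1:ℝ)) := by
      intro i z
      have h1 : HasFDerivAt (fun y => fderiv ℝ φ y (EuclideanSpace.single i (1:ℝ))) _ (x + τ • z) :=
        ((hDi i).differentiable (by norm_num) (x + τ • z)).hasFDerivAt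
      have h2 : HasFDerivAt (fun z : Euc d => x + τ • z) _ z :=
        ((hasFDerivAt_id (𝕜 := ℝ) z).const_smul τ).const_add x
      have h3 : HasFDerivAt (F i) _ z := HasFDerivAt.comp (g := fun y => fderiv ℝ φ y (EuclideanSpace.single i (1:ℝ))) z h1 h2
      rw [h3.fderiv]
      simp
    have hFs : ∀ z, |∑ i, fderiv ℝ (F i) z (EuclideanSpace.single i (1:ℝ))| ≤
        τ * (K * (1 + ‖x‖ + τ * ‖z‖)) := by
      intro z
      simp_rw [hFd]
      rw [← Finset.mul_sum, abs_mul, abs_of_nonneg hτ]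
      refine mul_le_mul_of_nonneg_left ((hK _).trans ?_) hτ
      refine mul_le_mul_of_nonneg_left ?_ hK0
      have := norm_add_le x (τ • z)
      rw [norm_smul, Real.norm_eq_abs, abs_of_nonneg hτ] at this
      linarith
    have e1 : ∀ z, fderiv ℝ φ (x + τ • z) z =
        ∑ i, inner ℝ z (EuclideanSpace.single i (1:ℝ)) * F i z := by
      intro z
      have hz : z = ∑ i, z i • (EuclideanSpace.single i (1:ℝ) : Euc d) := by
        ext j; simp [Finset.sum_apply, Pi.single_apply]
      conv_lhs => rw [show fderiv ℝ φ (x + τ • z) z =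
        fderiv ℝ φ (x + τ • z) (∑ i, z i • (EuclideanSpace.single i (1:ℝ) : Euc d)) from by
          rw [← hz]]
      rw [map_sum]
      simp [F, EuclideanSpace.inner_single_right]
    simp_rw [e1]
    rw [stein_div hF (C := A) (K := τ * (K * (1 + ‖x‖ + τ)))]
    · rw [← Real.norm_eq_abs]
      refine (norm_integral_le_of_norm_le (g := fun z => τ * (K * (1 + ‖x‖ + τ * ‖z‖))) ?_
        (Eventually.of_forall hFs)).trans ?_
      · exact (((integrable_const (1 + ‖x‖)).add (hnorm.const_mul τ)).const_mul K).const_mul τ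
      · rw [integral_const_mul, integral_const_mul, integral_add (integrable_const _)
          (hnorm.const_mul τ), integral_const_mul]
        simp only [integral_const, probReal_univ, one_smul]
        gcongr
        exact stdGaussian_norm_le d
    · intro i z
      refine ((fderiv ℝ φ (x + τ • z)).le_opNorm _).trans ?_
      simpa using hA _
    · intro z
      refine (hFs z).trans ?_
      rw [mul_assoc τ, mul_assoc K]
      gcongr
      nlinarith [norm_nonneg x, norm_nonneg z, mul_nonneg (norm_nonneg x) (norm_nonneg z)]
  set K' := K * (1 + ‖x‖ + T * Real.sqrt d) with hK'
  have hfin := image_norm_le_of_norm_deriv_right_le_deriv_boundary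
    (f := fun τ : ℝ => (∫ z, φ (x + τ • z) ∂γ) - φ x)
    (f' := fun τ : ℝ => ∫ z, fderiv ℝ φ (x + τ • z) z ∂γ)
    (a := 0) (b := T) (B := fun τ => K' * τ ^ 2 / 2) (B' := fun τ => τ * K')
    (fun τ _ => ((hder τ).sub_const _).continuousAt.continuousWithinAt)
    (fun τ _ => ((hder τ).sub_const _).hasDerivWithinAt)
    (by simp)
    (fun τ => by
      have := ((hasDerivAt_pow 2 τ).const_mul K').div_const 2
      refine this.congr_deriv ?_
      push_cast; ring)
    (fun τ hτ => by
      refine (hval τ hτ.1).trans ?_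
      have := hτ.1
      have := hτ.2
      rw [hK']
      gcongr)
    (Set.right_mem_Icc.2 hT)
  simpa using hfin

end Heat

section Analytic

open Filter Topology

lemma inner_gradient {d : ℕ} (f : Euc d → ℝ) (x v : Euc d) :
    inner ℝ (gradient f x) v = fderiv ℝ f x v := by
  simp [gradient]

lemma norm_gradient_sub {d : ℕ} (f : Euc d → ℝ) (x y : Euc d) :
    ‖gradient f x - gradient f y‖ = ‖fderiv ℝ f x - fderiv ℝ f y‖ := by
  unfold gradient
  rw [← map_sub, LinearIsometryEquiv.norm_map]

lemma fderiv2_symm {d : ℕ} {f : Euc d → ℝ} (hf : ContDiff ℝ 2 f) (x v w : Euc d) :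
    fderiv ℝ (fderiv ℝ f) x v w = fderiv ℝ (fderiv ℝ f) x w v :=
  (hf.contDiffAt.isSymmSndFDerivAt (by simp)).eq v w

lemma fderiv2_bound {d : ℕ} {f : Euc d → ℝ} {m L : ℝ} (hm : 0 < m) (hmL : m ≤ L)
    (hf : ContDiff ℝ 3 f) (hHess : HessianBounds m L f) (x : Euc d) :
    ‖fderiv ℝ (fderiv ℝ f) x‖ ≤ L := by
  have hL : 0 ≤ L := hm.le.trans hmL
  set D := fderiv ℝ (fderiv ℝ f) x with hD
  have hq : ∀ v, 0 ≤ D v v ∧ D v v ≤ L * ‖v‖ ^ 2 := by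
    intro v
    have := hHess x v
    simp only [iteratedFDeriv_two_apply, Matrix.cons_val_zero, Matrix.cons_val_one] at this
    exact ⟨(by positivity : 0 ≤ m * ‖v‖ ^ 2).trans this.1, this.2⟩
  have hs : ∀ v w, D v w = D w v := fderiv2_symm (hf.of_le (by norm_num)) x
  have hunit : ∀ v w : Euc d, |D v w| ≤ L * (‖v‖ ^ 2 + ‖w‖ ^ 2) / 2 := by
    intro v w
    have h1 := hq (v + w)
    have h2 := hq (v - w)
    have h3 := parallelogram_law_with_norm ℝ v w
    simp only [map_add, map_sub, add_apply, sub_apply] at h1 h2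
    have h4 := hs v w
    rw [abs_le]
    constructor <;> nlinarith [hq v, hq w]
  refine ContinuousLinearMap.opNorm_le_bound _ hL fun v => ?_
  refine ContinuousLinearMap.opNorm_le_bound _ (by positivity) fun w => ?_
  rcases eq_or_ne v 0 with rfl | hv
  · simp
  rcases eq_or_ne w 0 with rfl | hw
  · simp
  have hv' : 0 < ‖v‖ := norm_pos_iff.2 hv
  have hw' : 0 < ‖w‖ := norm_pos_iff.2 hw
  have h := hunit (‖v‖⁻¹ • v) (‖w‖⁻¹ • w)
  simp only [map_smul, smul_apply, norm_smul, norm_inv, norm_norm, smul_eq_mul] at h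
  rw [inv_mul_cancel₀ hv'.ne', inv_mul_cancel₀ hw'.ne', ← mul_assoc, abs_mul,
    abs_of_nonneg (by positivity)] at h
  rw [Real.norm_eq_abs]
  have h5 : |D v w| = (‖v‖ * ‖w‖) * (‖w‖⁻¹ * ‖v‖⁻¹ * |D v w|) := by field_simp
  have h6 : (‖v‖ * ‖w‖) * (‖w‖⁻¹ * ‖v‖⁻¹ * |D v w|) ≤ (‖v‖ * ‖w‖) * L := by
    refine mul_le_mul_of_nonneg_left ?_ (by positivity)
    linarith
  rw [h5]
  linarith

lemma gradient_lip {d : ℕ} {f : Euc d → ℝ} {m L : ℝ} (hm : 0 < m) (hmL : m ≤ L)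
    (hf : ContDiff ℝ 3 f) (hHess : HessianBounds m L f) (x y : Euc d) :
    ‖gradient f x - gradient f y‖ ≤ L * ‖x - y‖ := by
  rw [norm_gradient_sub]
  have h1 : ContDiff ℝ 2 (fderiv ℝ f) := hf.fderiv_right (by norm_num)
  exact convex_univ.norm_image_sub_le_of_norm_fderiv_le
    (fun y _ => h1.differentiable (by norm_num) y)
    (fun y _ => fderiv2_bound hm hmL hf hHess y) (Set.mem_univ y) (Set.mem_univ x)

lemma fderiv_dir {d : ℕ} {g : Euc d → ℝ} (hg : ContDiff ℝ 2 g) (v x w : Euc d) :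
    fderiv ℝ (fun y => fderiv ℝ g y v) x w = fderiv ℝ (fderiv ℝ g) x w v := by
  have h1 : DifferentiableAt ℝ (fderiv ℝ g) x :=
    (hg.fderiv_right (m := 1) (by norm_num)).differentiable (by norm_num) x
  rw [fderiv_clm_apply h1 (differentiableAt_const v)]
  simp

lemma dir_contDiff {d : ℕ} {f : Euc d → ℝ} (hf : ContDiff ℝ 3 f) (v : Euc d) :
    ContDiff ℝ 2 (fun y => fderiv ℝ f y v) :=
  (hf.fderiv_right (m := 2) (by norm_num)).clm_apply contDiff_const

lemma dir_bound {d : ℕ} {f : Euc d → ℝ} {m L : ℝ} (hm : 0 < m) (hmL : m ≤ L)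
    (hf : ContDiff ℝ 3 f) (hHess : HessianBounds m L f) (v x : Euc d) :
    ‖fderiv ℝ (fun y => fderiv ℝ f y v) x‖ ≤ L * ‖v‖ := by
  have hL : 0 ≤ L := hm.le.trans hmL
  refine ContinuousLinearMap.opNorm_le_bound _ (by positivity) fun w => ?_
  rw [fderiv_dir (hf.of_le (by norm_num)), mul_right_comm]
  exact ContinuousLinearMap.le_of_opNorm_le _
    (ContinuousLinearMap.le_of_opNorm_le _ (fderiv2_bound hm hmL hf hHess x) w) v

lemma dir_lapl {d : ℕ} {f : Euc d → ℝ} (hf : ContDiff ℝ 3 f) (v x : Euc d) :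
    ∑ i, fderiv ℝ (fun y => fderiv ℝ (fun y => fderiv ℝ f y v) y (EuclideanSpace.single i (1:ℝ))) x
      (EuclideanSpace.single i (1:ℝ)) = fderiv ℝ (lapl f) x v := by
  have hf2 : ContDiff ℝ 2 f := hf.of_le (by norm_num)
  have e : lapl f = fun y => ∑ i : Fin d, fderiv ℝ (fun y => fderiv ℝ f y
      (EuclideanSpace.single i (1:ℝ))) y (EuclideanSpace.single i (1:ℝ)) := by
    ext y
    simp only [lapl, iteratedFDeriv_two_apply, Matrix.cons_val_zero, Matrix.cons_val_one]
    congr 1; ext i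
    rw [fderiv_dir hf2]
  have hC : ∀ i : Fin d, ContDiff ℝ 1 fun y => fderiv ℝ (fun y => fderiv ℝ f y
      (EuclideanSpace.single i (1:ℝ))) y (EuclideanSpace.single i (1:ℝ)) := fun i =>
    ((dir_contDiff hf _).fderiv_right (m := 1) (by norm_num)).clm_apply contDiff_const
  rw [e, fderiv_fun_sum (fun i _ => (hC i).differentiable (by norm_num) x)]
  simp only [FunLike.coe_sum, Finset.sum_apply]
  congr 1; ext i
  set g : Euc d → ℝ := fun y => fderiv ℝ f y (EuclideanSpace.single i (1:ℝ)) with hg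
  have hg2 : ContDiff ℝ 2 g := dir_contDiff hf _
  have e2 : (fun y => fderiv ℝ (fun y => fderiv ℝ f y v) y (EuclideanSpace.single i (1:ℝ))) =
      fun y => fderiv ℝ g y v := by
    ext y
    rw [fderiv_dir hf2, hg, fderiv_dir hf2, fderiv2_symm hf2]
  rw [e2, fderiv_dir hg2, fderiv_dir hg2, fderiv2_symm hg2]

lemma dir_lapl_bound {d : ℕ} {f : Euc d → ℝ} {G : ℝ} (hf : ContDiff ℝ 3 f)
    (hlapl : ∀ x : Euc d, ‖gradient (lapl f) x‖ ≤ G * (1 + ‖x‖)) (v x : Euc d) :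
    |∑ i, fderiv ℝ (fun y => fderiv ℝ (fun y => fderiv ℝ f y v) y
      (EuclideanSpace.single i (1:ℝ))) x
      (EuclideanSpace.single i (1:ℝ))| ≤ (G * ‖v‖) * (1 + ‖x‖) := by
  rw [dir_lapl hf, ← inner_gradient]
  refine (abs_real_inner_le_norm _ _).trans ?_
  calc _ ≤ G * (1 + ‖x‖) * ‖v‖ := mul_le_mul_of_nonneg_right (hlapl x) (norm_nonneg _)
    _ = _ := by ring

end Analytic

section Stoch

open Filter Topology

lemma rootGaussian_eq (d : ℕ) : _root_.stdGaussian d = ProbabilityTheory.stdGaussian (Euc d) := by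
  rw [← map_pi_eq_stdGaussian]
  rfl

lemma brownian_law {d : ℕ} {Ω : Type*} {mΩ : MeasurableSpace Ω} {P : Measure Ω}
    {ℱ : Filtration ℝ mΩ} {B : ℝ → Ω → Euc d} (hB : IsStdBrownian P ℱ B) {s : ℝ} (hs : 0 ≤ s) :
    P.map (B s) = (ProbabilityTheory.stdGaussian (Euc d)).map (fun z => Real.sqrt s • z) := by
  have h := hB.incr_law 0 s le_rfl hs
  simp only [hB.init, sub_zero, isoGaussian, rootGaussian_eq] at h
  exact h

lemma brownian_integrable {d : ℕ} {Ω : Type*} {mΩ : MeasurableSpace Ω} {P : Measure Ω}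
    {ℱ : Filtration ℝ mΩ} {B : ℝ → Ω → Euc d} (hB : IsStdBrownian P ℱ B) {s : ℝ} (hs : 0 ≤ s) :
    Integrable (B s) P ∧ ∫ ω, ‖B s ω‖ ∂P ≤ Real.sqrt s * Real.sqrt d := by
  have hm : AEMeasurable (B s) P := ((hB.adapted s).mono (ℱ.le s)).measurable.aemeasurable
  have hl := brownian_law hB hs
  have hz : Integrable (fun z : Euc d => Real.sqrt s • z)
      (ProbabilityTheory.stdGaussian (Euc d)) :=
    (IsGaussian.integrable_id (μ := ProbabilityTheory.stdGaussian (Euc d))).fun_smul _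
  constructor
  · have h1 : Integrable (fun b => b) (P.map (B s)) := by
      rw [hl, integrable_map_measure (by fun_prop) (by fun_prop)]
      exact hz
    exact h1.comp_aemeasurable hm
  · have h1 : ∫ ω, ‖B s ω‖ ∂P = ∫ b, ‖b‖ ∂(P.map (B s)) :=
      (integral_map hm (by fun_prop)).symm
    rw [h1, hl, integral_map (by fun_prop) (by fun_prop)]
    simp only [norm_smul, Real.norm_eq_abs, abs_of_nonneg (Real.sqrt_nonneg s)]
    rw [integral_const_mul]
    exact mul_le_mul_of_nonneg_left (stdGaussian_norm_le d) (Real.sqrt_nonneg s)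

lemma indep_step {d : ℕ} {Ω : Type*} {mΩ : MeasurableSpace Ω} {P : Measure Ω}
    [IsProbabilityMeasure P]
    {ℱ : Filtration ℝ mΩ} {B : ℝ → Ω → Euc d} (hB : IsStdBrownian P ℱ B) {s : ℝ} (hs : 0 ≤ s)
    {X0 : Ω → Euc d} (hX0 : StronglyMeasurable[ℱ 0] X0) (hXi : Integrable X0 P)
    {φ : Euc d → ℝ} (hφ : ContDiff ℝ 2 φ) {A K : ℝ}
    (hA : ∀ x, ‖fderiv ℝ φ x‖ ≤ A)
    (hK : ∀ y, |∑ i, fderiv ℝ (fun y => fderiv ℝ φ y (EuclideanSpace.single i (1:ℝ))) y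
      (EuclideanSpace.single i (1:ℝ))| ≤ K * (1 + ‖y‖)) :
    Integrable (fun ω => φ (X0 ω + Real.sqrt 2 • B s ω)) P ∧ Integrable (fun ω => φ (X0 ω)) P ∧
    |∫ ω, (φ (X0 ω + Real.sqrt 2 • B s ω) - φ (X0 ω)) ∂P| ≤
      K * (1 + (∫ ω, ‖X0 ω‖ ∂P) + Real.sqrt 2 * Real.sqrt s * Real.sqrt d) * s := by
  have hXm : Measurable X0 := (hX0.mono (ℱ.le 0)).measurable
  have hBm : Measurable (B s) := ((hB.adapted s).mono (ℱ.le s)).measurable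
  have hBi := (brownian_integrable hB hs).1
  have hdf : Differentiable ℝ φ := hφ.differentiable (by norm_num)
  have hlip : ∀ y, ‖φ y - φ 0‖ ≤ A * ‖y - 0‖ := fun y =>
    convex_univ.norm_image_sub_le_of_norm_fderiv_le (fun y _ => hdf y) (fun y _ => hA y)
      (Set.mem_univ 0) (Set.mem_univ y)
  have hint : ∀ Y : Ω → Euc d, Integrable Y P → Integrable (fun ω => φ (Y ω)) P := by
    intro Y hY
    refine Integrable.mono' ((hY.norm.const_mul A).add (integrable_const |φ 0|))
      (hdf.continuous.comp_aestronglyMeasurable hY.1) (Eventually.of_forall fun ω => ?_)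
    have h1 := hlip (Y ω)
    have h2 : φ (Y ω) = (φ (Y ω) - φ 0) + φ 0 := by ring
    rw [h2]
    refine (norm_add_le _ _).trans (add_le_add ?_ le_rfl)
    simpa using h1
  have hi1 := hint _ (hXi.add (hBi.smul (Real.sqrt 2)))
  have hi0 := hint _ hXi
  refine ⟨hi1, hi0, ?_⟩
  have hind : IndepFun X0 (B s) P := by
    have h1 := hB.incr_indep 0 s le_rfl hs
    simp only [hB.init, sub_zero] at h1
    have h2 : Indep (MeasurableSpace.comap X0 inferInstance)
        (MeasurableSpace.comap (B s) inferInstance) P :=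
      (indep_of_indep_of_le_right h1 hX0.measurable.comap_le).symm
    exact h2
  have hpair := (indepFun_iff_map_prod_eq_prod_map_map hXm.aemeasurable hBm.aemeasurable).1 hind
  set μ := P.map X0 with hμ
  have : IsProbabilityMeasure μ := Measure.isProbabilityMeasure_map hXm.aemeasurable
  have : IsProbabilityMeasure (P.map (B s)) := Measure.isProbabilityMeasure_map hBm.aemeasurable
  let g : Euc d × Euc d → ℝ := fun p => φ (p.1 + Real.sqrt 2 • p.2) - φ p.1
  have hgc : Continuous g := by
    have := hdf.continuous
    fun_prop
  have hgi : Integrable g (μ.prod (P.map (B s))) := by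
    rw [← hpair, integrable_map_measure hgc.aestronglyMeasurable (hXm.prodMk hBm).aemeasurable]
    exact hi1.sub hi0
  have e1 : ∫ ω, (φ (X0 ω + Real.sqrt 2 • B s ω) - φ (X0 ω)) ∂P =
      ∫ p, g p ∂(P.map fun ω => (X0 ω, B s ω)) :=
    (integral_map (hXm.prodMk hBm).aemeasurable hgc.aestronglyMeasurable).symm
  rw [e1, hpair, integral_prod _ hgi]
  set T := Real.sqrt 2 * Real.sqrt s with hT
  have hT2 : T ^ 2 / 2 = s := by
    rw [hT, mul_pow, Real.sq_sqrt (by norm_num), Real.sq_sqrt hs]; ring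
  have hin : ∀ x, |∫ b, g (x, b) ∂(P.map (B s))| ≤ K * (1 + ‖x‖ + T * Real.sqrt d) * s := by
    intro x
    rw [brownian_law hB hs, integral_map (by fun_prop)
      (Continuous.aestronglyMeasurable (by fun_prop))]
    have h := heat_bound hφ hA hK x (T := T) (by positivity)
    rw [mul_div_assoc, hT2] at h
    simp only [g]
    have hzi : Integrable (fun z => φ (x + Real.sqrt 2 • Real.sqrt s • z))
        (ProbabilityTheory.stdGaussian (Euc d)) := by
      have hnorm : Integrable (fun z : Euc d => ‖x + Real.sqrt 2 • Real.sqrt s • z‖)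
        (ProbabilityTheory.stdGaussian (Euc d)) :=
        ((integrable_const x).add ((IsGaussian.integrable_id.smul (Real.sqrt s)).smul
          (Real.sqrt 2))).norm
      refine Integrable.mono' ((hnorm.const_mul A).add (integrable_const |φ 0|))
        (hdf.continuous.comp (by fun_prop)).aestronglyMeasurable
        (Eventually.of_forall fun z => ?_)
      have h1 := hlip (x + Real.sqrt 2 • Real.sqrt s • z)
      have h2 : φ (x + Real.sqrt 2 • Real.sqrt s • z) =
        (φ (x + Real.sqrt 2 • Real.sqrt s • z) - φ 0) + φ 0 := by ring
      rw [h2]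
      refine (norm_add_le _ _).trans (add_le_add ?_ le_rfl)
      simpa using h1
    rw [integral_sub hzi (integrable_const _)]
    simpa [hT, mul_smul] using h
  have hnμ : Integrable (fun x => ‖x‖) μ := by
    rw [hμ, integrable_map_measure (by fun_prop) hXm.aemeasurable]
    exact hXi.norm
  rw [← Real.norm_eq_abs]
  refine (norm_integral_le_of_norm_le
    ((((integrable_const (1:ℝ)).add hnμ).add
      (integrable_const (T * Real.sqrt d))).const_mul K |>.mul_const s)
    (Eventually.of_forall hin)).trans ?_
  have e2 : ∫ x, ‖x‖ ∂μ = ∫ ω, ‖X0 ω‖ ∂P := integral_map hXm.aemeasurable (by fun_prop)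
  rw [integral_mul_const, integral_const_mul]
  have e3 : ∫ a, (1 + ‖a‖ + T * Real.sqrt d) ∂μ =
      1 + (∫ ω, ‖X0 ω‖ ∂P) + T * Real.sqrt d := by
    rw [integral_add (f := fun a : Euc d => 1 + ‖a‖) ((integrable_const (1:ℝ)).add hnμ)
      (integrable_const _), integral_add (integrable_const (1:ℝ)) hnμ, e2]
    simp
  simp only [Pi.add_apply]
  rw [e3]

lemma path_bound_s4 {d : ℕ} {L h : ℝ} (hL : 0 ≤ L) (hLh : L * h ≤ 1 / 4)
    {g : Euc d → Euc d} (hgL : ∀ x, ‖g x‖ ≤ L * ‖x‖)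
    {b x : ℝ → Euc d} (hb : Continuous b) (hx : Continuous x)
    (heq : ∀ t, 0 ≤ t → x t = x 0 - (∫ s in (0:ℝ)..t, g (x s)) + Real.sqrt 2 • b t)
    {r : ℝ} (hr0 : 0 ≤ r) (hrh : r ≤ h) :
    ‖x r‖ ≤ 4 / 3 * (‖x 0‖ + Real.sqrt 2 * L * ∫ s in (0:ℝ)..h, ‖b s‖) + Real.sqrt 2 * ‖b r‖ := by
  let y : ℝ → Euc d := fun t => x t - Real.sqrt 2 • b t
  have hy : Continuous y := by fun_prop
  obtain ⟨t, ht, hmax⟩ := isCompact_Icc.exists_isMaxOn (s := Set.Icc 0 h)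
    ⟨r, hr0, hrh⟩ (f := fun t => ‖y t‖) hy.norm.continuousOn
  have hyx : ∀ u, ‖x u‖ ≤ ‖y u‖ + Real.sqrt 2 * ‖b u‖ := by
    intro u
    have : x u = y u + Real.sqrt 2 • b u := by simp [y]
    rw [this]
    refine (norm_add_le _ _).trans ?_
    rw [norm_smul, Real.norm_eq_abs, abs_of_nonneg (Real.sqrt_nonneg 2)]
  set I := ∫ s in (0:ℝ)..h, ‖b s‖ with hI
  have h1 : ‖y t‖ ≤ ‖x 0‖ + (L * ‖y t‖ * h + Real.sqrt 2 * L * I) := by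
    have e : y t = x 0 - ∫ s in (0:ℝ)..t, g (x s) := by
      simp only [y]; rw [heq t ht.1]; abel
    have hle : ‖∫ s in (0:ℝ)..t, g (x s)‖ ≤ L * ‖y t‖ * h + Real.sqrt 2 * L * I := by
      have hc : Continuous fun s => L * ‖y t‖ + Real.sqrt 2 * L * ‖b s‖ := by fun_prop
      calc ‖∫ s in (0:ℝ)..t, g (x s)‖
          ≤ ∫ s in (0:ℝ)..t, (L * ‖y t‖ + Real.sqrt 2 * L * ‖b s‖) := by
            refine intervalIntegral.norm_integral_le_of_norm_le ht.1
              (Eventually.of_forall fun s hs => ?_) (hc.intervalIntegrable _ _)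
            refine (hgL _).trans ?_
            have h2 : ‖y s‖ ≤ ‖y t‖ := hmax ⟨hs.1.le, hs.2.trans ht.2⟩
            have h3 := hyx s
            calc L * ‖x s‖ ≤ L * (‖y t‖ + Real.sqrt 2 * ‖b s‖) :=
                  mul_le_mul_of_nonneg_left (by linarith) hL
              _ = _ := by ring
        _ ≤ ∫ s in (0:ℝ)..h, (L * ‖y t‖ + Real.sqrt 2 * L * ‖b s‖) := by
            refine intervalIntegral.integral_mono_interval le_rfl ht.1 ht.2
              (Eventually.of_forall fun s => ?_) (hc.intervalIntegrable _ _)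
            simp only [Pi.zero_apply]
            positivity
        _ = _ := by
            rw [intervalIntegral.integral_add (by simp)
              ((hb.norm.const_mul _).intervalIntegrable _ _),
              intervalIntegral.integral_const_mul]
            simp; ring
    calc ‖y t‖ = ‖x 0 - ∫ s in (0:ℝ)..t, g (x s)‖ := by rw [← e]
      _ ≤ ‖x 0‖ + ‖∫ s in (0:ℝ)..t, g (x s)‖ := norm_sub_le _ _
      _ ≤ _ := by linarith
  have h2 : ‖y r‖ ≤ ‖y t‖ := hmax ⟨hr0, hrh⟩
  have h3 : L * ‖y t‖ * h ≤ 1 / 4 * ‖y t‖ := by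
    have := mul_le_mul_of_nonneg_right hLh (norm_nonneg (y t))
    linarith
  have h4 := hyx r
  linarith

end Stoch

section Assemble

open Filter Topology

lemma prod_integrable_aux {d : ℕ} {Ω : Type*} {mΩ : MeasurableSpace Ω} {P : Measure Ω}
    [IsProbabilityMeasure P] {u : ℝ → Ω → Euc d} (hu : StronglyMeasurable (Function.uncurry u))
    {h M : ℝ} (h0 : 0 ≤ h)
    (hi : ∀ r, 0 ≤ r → r ≤ h → Integrable (u r) P ∧ ∫ ω, ‖u r ω‖ ∂P ≤ M) :
    Integrable (Function.uncurry u) ((volume.restrict (Set.uIoc 0 h)).prod P) ∧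
    Integrable (fun ω => ∫ s in (0:ℝ)..h, ‖u s ω‖) P ∧
    ∫ ω, (∫ s in (0:ℝ)..h, ‖u s ω‖) ∂P ≤ h * M := by
  have hmem : ∀ᵐ r ∂(volume.restrict (Set.uIoc 0 h)), 0 ≤ r ∧ r ≤ h := by
    refine (ae_restrict_mem measurableSet_uIoc).mono fun r hr => ?_
    rw [Set.uIoc_of_le h0] at hr
    exact ⟨hr.1.le, hr.2⟩
  have h1 : Integrable (Function.uncurry u) ((volume.restrict (Set.uIoc 0 h)).prod P) := by
    rw [integrable_prod_iff hu.aestronglyMeasurable]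
    refine ⟨hmem.mono fun r hr => (hi r hr.1 hr.2).1, ?_⟩
    have : IsFiniteMeasure (volume.restrict (Set.uIoc 0 h)) := by
      rw [Set.uIoc_of_le h0]; infer_instance
    refine Integrable.of_bound (hu.norm.integral_prod_right'.aestronglyMeasurable) M
      (hmem.mono fun r hr => ?_)
    rw [Real.norm_eq_abs, abs_of_nonneg (integral_nonneg fun _ => norm_nonneg _)]
    exact (hi r hr.1 hr.2).2
  refine ⟨h1, ?_, ?_⟩
  · have h2 := h1.norm.integral_prod_right
    simp only [intervalIntegral.integral_of_le h0]
    rw [Set.uIoc_of_le h0] at h2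
    exact h2
  · rw [← intervalIntegral_integral_swap (f := fun s ω => ‖u s ω‖) h1.norm]
    refine (le_abs_self _).trans ?_
    have h3 := intervalIntegral.norm_integral_le_of_norm_le_const (a := 0) (b := h) (C := M)
      (f := fun s => ∫ ω, ‖u s ω‖ ∂P) (fun r hr => by
        rw [Set.uIoc_of_le h0] at hr
        rw [Real.norm_eq_abs, abs_of_nonneg (integral_nonneg fun _ => norm_nonneg _)]
        exact (hi r hr.1.le hr.2).2)
    rw [sub_zero, abs_of_nonneg h0, mul_comm] at h3
    exact h3

lemma solution_moment {d : ℕ} {Ω : Type*} {mΩ : MeasurableSpace Ω} {P : Measure Ω}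
    [IsProbabilityMeasure P] {ℱ : Filtration ℝ mΩ} {f : Euc d → ℝ} {L : ℝ} (hL : 0 ≤ L)
    (hgL : ∀ x, ‖gradient f x‖ ≤ L * ‖x‖)
    {B X : ℝ → Ω → Euc d} (hB : IsStdBrownian P ℱ B)
    (hX : IsLangevinSolution ℱ f B X) (hX0 : Integrable (X 0) P)
    {h : ℝ} (hLh : L * h ≤ 1 / 4) {r : ℝ} (hr0 : 0 ≤ r) (hrh : r ≤ h) :
    Integrable (X r) P ∧ ∫ ω, ‖X r ω‖ ∂P ≤
      4 / 3 * ((∫ ω, ‖X 0 ω‖ ∂P) + Real.sqrt 2 * Real.sqrt h * Real.sqrt d) := by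
  have h0 : 0 ≤ h := hr0.trans hrh
  have hBj : StronglyMeasurable (Function.uncurry B) :=
    stronglyMeasurable_uncurry_of_continuous_of_stronglyMeasurable hB.cont
      (fun s => (hB.adapted s).mono (ℱ.le s))
  obtain ⟨-, hI, hIE⟩ := prod_integrable_aux (P := P) hBj (M := Real.sqrt h * Real.sqrt d) h0
    (fun r hr0 hrh => ⟨(brownian_integrable hB hr0).1, (brownian_integrable hB hr0).2.trans
      (mul_le_mul_of_nonneg_right (Real.sqrt_le_sqrt hrh) (Real.sqrt_nonneg _))⟩)
  obtain ⟨hBr, hBE⟩ := brownian_integrable hB hr0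
  have hBE' : ∫ ω, ‖B r ω‖ ∂P ≤ Real.sqrt h * Real.sqrt d :=
    hBE.trans (mul_le_mul_of_nonneg_right (Real.sqrt_le_sqrt hrh) (Real.sqrt_nonneg _))
  have hbd : ∀ ω, ‖X r ω‖ ≤ 4 / 3 * (‖X 0 ω‖ + Real.sqrt 2 * L * ∫ s in (0:ℝ)..h, ‖B s ω‖) +
      Real.sqrt 2 * ‖B r ω‖ := fun ω =>
    path_bound_s4 (x := fun t => X t ω) (b := fun t => B t ω) hL hLh hgL (hB.cont ω) (hX.cont ω)
      (hX.eqn ω) hr0 hrh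
  have hi1 : Integrable (fun ω => 4 / 3 * (‖X 0 ω‖ + Real.sqrt 2 * L *
      ∫ s in (0:ℝ)..h, ‖B s ω‖)) P := (hX0.norm.add (hI.const_mul _)).const_mul _
  have hi2 : Integrable (fun ω => Real.sqrt 2 * ‖B r ω‖) P := hBr.norm.const_mul _
  have hXr : Integrable (X r) P := by
    refine Integrable.mono' (hi1.add hi2)
      ((hX.adapted r).mono (ℱ.le r)).aestronglyMeasurable (Eventually.of_forall hbd)
  refine ⟨hXr, (integral_mono hXr.norm (hi1.add hi2) hbd).trans ?_⟩
  simp only [Pi.add_apply]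
  rw [integral_add hi1 hi2, integral_const_mul, integral_add hX0.norm (hI.const_mul _),
    integral_const_mul, integral_const_mul]
  set q := Real.sqrt h * Real.sqrt d with hq
  have hq0 : 0 ≤ q := by positivity
  have h2 : 0 ≤ Real.sqrt 2 := Real.sqrt_nonneg 2
  have a1 : Real.sqrt 2 * L * ∫ ω, (∫ s in (0:ℝ)..h, ‖B s ω‖) ∂P ≤ Real.sqrt 2 * (1 / 4 * q) := by
    calc _ ≤ Real.sqrt 2 * L * (h * q) := mul_le_mul_of_nonneg_left hIE (by positivity)
      _ = Real.sqrt 2 * (L * h * q) := by ring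
      _ ≤ _ := by gcongr
  have a2 : Real.sqrt 2 * ∫ ω, ‖B r ω‖ ∂P ≤ Real.sqrt 2 * q :=
    mul_le_mul_of_nonneg_left hBE' h2
  have a3 : Real.sqrt 2 * Real.sqrt h * Real.sqrt d = Real.sqrt 2 * q := by rw [hq, mul_assoc]
  rw [a3]
  linarith

end Assemble

set_option maxHeartbeats 4000000

/-- **Local weak error of LMC** (Lemma 6).
If `f ∈ C³` is `m`-strongly convex and `L`-smooth (`0 < m ≤ L`), `∇f(0) = 0`,
`‖∇(Δf)(x)‖ ≤ G(1 + ‖x‖)` for all `x` (with `G > 0`), `X` solves the overdamped Langevin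
dynamics with square-integrable initial value `x = X_0`, and
`x̄₁ = x - h ∇f(x) + √2 B_h` is the one-step LMC update driven by the same Brownian increment,
then for every `0 ≤ h ≤ 1/(4κL)` (where `κ = L/m`):
`‖E[x̄₁] - E[X_h]‖ ≤ 2 (L² + G) (d/(4κL) + E‖x‖² + 1)^{1/2} h²`. -/
theorem lmc_local_weak_error
    {d : ℕ} {Ω : Type*} {mΩ : MeasurableSpace Ω} {P : Measure Ω} [IsProbabilityMeasure P]
    {ℱ : Filtration ℝ mΩ} {f : Euc d → ℝ} {m L G : ℝ}
    (hm : 0 < m) (hmL : m ≤ L) (hf : ContDiff ℝ 3 f) (hHess : HessianBounds m L f)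
    (hgrad0 : gradient f 0 = 0) (hG : 0 < G)
    (hlapl : ∀ x : Euc d, ‖gradient (lapl f) x‖ ≤ G * (1 + ‖x‖))
    {B X : ℝ → Ω → Euc d} (hB : IsStdBrownian P ℱ B)
    (hX : IsLangevinSolution ℱ f B X) (hX0 : MemLp (X 0) 2 P)
    {h : ℝ} (hh0 : 0 ≤ h) (hh1 : h ≤ 1 / (4 * (L / m) * L)) :
    ‖(∫ ω, (X 0 ω - h • gradient f (X 0 ω) + Real.sqrt 2 • B h ω) ∂P) - (∫ ω, X h ω ∂P)‖ ≤
      2 * (L ^ 2 + G) *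
        Real.sqrt (d / (4 * (L / m) * L) + (∫ ω, ‖X 0 ω‖ ^ 2 ∂P) + 1) * h ^ 2 := by
  have hL : 0 < L := hm.trans_le hmL
  have hLh : L * h ≤ 1 / 4 := by
    calc L * h ≤ L * (1 / (4 * (L / m) * L)) := mul_le_mul_of_nonneg_left hh1 hL.le
      _ = m / (4 * L) := by field_simp
      _ ≤ 1 / 4 := by rw [div_le_div_iff₀ (by positivity) (by norm_num)]; linarith
  have hhd : h * d ≤ d / (4 * (L / m) * L) := by
    calc h * d ≤ 1 / (4 * (L / m) * L) * d := mul_le_mul_of_nonneg_right hh1 (Nat.cast_nonneg d)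
      _ = _ := by ring
  have hgl := gradient_lip hm hmL hf hHess
  have hgL : ∀ x, ‖gradient f x‖ ≤ L * ‖x‖ := fun x => by
    have := hgl x 0
    simpa [hgrad0] using this
  have hgc : Continuous (gradient f) :=
    (LipschitzWith.of_dist_le_mul (K := ⟨L, hL.le⟩) fun x y => by
      rw [dist_eq_norm, dist_eq_norm]; exact hgl x y).continuous
  have hX0i : Integrable (X 0) P := hX0.integrable (by norm_num)
  set e := ∫ ω, ‖X 0 ω‖ ∂P with he
  set q := Real.sqrt 2 * Real.sqrt h * Real.sqrt d with hq
  have he0 : 0 ≤ e := integral_nonneg fun _ => norm_nonneg _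
  have hq0 : 0 ≤ q := by positivity
  set M := 4 / 3 * (e + q) with hM
  have hM0 : 0 ≤ M := by positivity
  have hmom : ∀ r, 0 ≤ r → r ≤ h → Integrable (X r) P ∧ ∫ ω, ‖X r ω‖ ∂P ≤ M :=
    fun r hr0 hrh => solution_moment hL.le hgL hB hX hX0i hLh hr0 hrh
  have hXj : StronglyMeasurable (Function.uncurry X) :=
    stronglyMeasurable_uncurry_of_continuous_of_stronglyMeasurable hX.cont
      (fun s => (hX.adapted s).mono (ℱ.le s))
  have hgi : ∀ Y : Ω → Euc d, Integrable Y P → Integrable (fun ω => gradient f (Y ω)) P :=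
    fun Y hY => Integrable.mono' (hY.norm.const_mul L) (hgc.comp_aestronglyMeasurable hY.1)
      (Filter.Eventually.of_forall fun ω => hgL _)
  set c := (L ^ 2 + G) * (4 / 3 * (1 + e + q)) with hc
  have hc0 : 0 ≤ c := by
    have h1 : 0 ≤ 1 + e + q := by linarith
    have h2 : 0 ≤ L ^ 2 + G := by positivity
    exact mul_nonneg h2 (mul_nonneg (by norm_num) h1)
  -- the weak estimate at time `s`
  have hweak : ∀ s, 0 ≤ s → s ≤ h →
      ‖∫ ω, (gradient f (X s ω) - gradient f (X 0 ω)) ∂P‖ ≤ c * s := by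
    intro s hs0 hsh
    have hgs := hgi _ (hmom s hs0 hsh).1
    have hg0 := hgi _ hX0i
    set w := ∫ ω, (gradient f (X s ω) - gradient f (X 0 ω)) ∂P with hw
    have hdir : ∀ v : Euc d, inner ℝ w v ≤ ‖v‖ * (c * s) := by
      intro v
      let φ : Euc d → ℝ := fun y => fderiv ℝ f y v
      obtain ⟨i1, i0, hstep⟩ := indep_step hB hs0 (hX.adapted 0) hX0i (dir_contDiff hf v)
        (dir_bound hm hmL hf hHess v) (dir_lapl_bound hf hlapl v)
      obtain ⟨-, hJ, hJE⟩ := prod_integrable_aux (P := P) hXj (M := M) hs0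
        (fun r hr0 hrs => hmom r hr0 (hrs.trans hsh))
      have e1 : inner ℝ w v = ∫ ω, (fderiv ℝ f (X s ω) v - fderiv ℝ f (X 0 ω) v) ∂P := by
        rw [real_inner_comm, hw, ← integral_inner (𝕜 := ℝ)
          (f := fun ω => gradient f (X s ω) - gradient f (X 0 ω)) (hgs.sub hg0)]
        congr 1; ext ω
        rw [inner_sub_right, real_inner_comm, inner_gradient, real_inner_comm, inner_gradient]
      have is : Integrable (fun ω => fderiv ℝ f (X s ω) v) P := by
        have := hgs.inner_const (𝕜 := ℝ) v
        simpa only [inner_gradient] using this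
      have e2 : inner ℝ w v =
          (∫ ω, (fderiv ℝ f (X s ω) v - fderiv ℝ f (X 0 ω + Real.sqrt 2 • B s ω) v) ∂P) +
          ∫ ω, (fderiv ℝ f (X 0 ω + Real.sqrt 2 • B s ω) v - fderiv ℝ f (X 0 ω) v) ∂P := by
        rw [e1, ← integral_add
          (f := fun ω => fderiv ℝ f (X s ω) v - fderiv ℝ f (X 0 ω + Real.sqrt 2 • B s ω) v)
          (g := fun ω => fderiv ℝ f (X 0 ω + Real.sqrt 2 • B s ω) v - fderiv ℝ f (X 0 ω) v)
          (is.sub i1) (i1.sub i0)]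
        congr 1; ext ω; ring
      have hfirst : ∫ ω, (fderiv ℝ f (X s ω) v - fderiv ℝ f (X 0 ω + Real.sqrt 2 • B s ω) v) ∂P
          ≤ (L * ‖v‖ * L) * (s * M) := by
        have hpt : ∀ ω, fderiv ℝ f (X s ω) v - fderiv ℝ f (X 0 ω + Real.sqrt 2 • B s ω) v ≤
            (L * ‖v‖ * L) * ∫ r in (0:ℝ)..s, ‖X r ω‖ := by
          intro ω
          have b1 := convex_univ.norm_image_sub_le_of_norm_fderiv_le (𝕜 := ℝ)
            (f := fun y => fderiv ℝ f y v)
            (fun y _ => (dir_contDiff hf v).differentiable (by norm_num) y)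
            (fun y _ => dir_bound hm hmL hf hHess v y)
            (Set.mem_univ (X 0 ω + Real.sqrt 2 • B s ω)) (Set.mem_univ (X s ω))
          have b2 : X s ω - (X 0 ω + Real.sqrt 2 • B s ω) =
              - ∫ r in (0:ℝ)..s, gradient f (X r ω) := by
            rw [hX.eqn ω s hs0]; abel
          have b3 : ‖∫ r in (0:ℝ)..s, gradient f (X r ω)‖ ≤ ∫ r in (0:ℝ)..s, L * ‖X r ω‖ :=
            intervalIntegral.norm_integral_le_of_norm_le hs0
              (Filter.Eventually.of_forall fun r _ => hgL _)
              (((hX.cont ω).norm.const_mul L).intervalIntegrable _ _)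
          rw [intervalIntegral.integral_const_mul] at b3
          rw [b2, norm_neg] at b1
          refine (le_abs_self _).trans (b1.trans ?_)
          rw [mul_assoc (L * ‖v‖)]
          exact mul_le_mul_of_nonneg_left b3 (by positivity)
        refine (integral_mono (is.sub i1) (hJ.const_mul _) hpt).trans ?_
        rw [integral_const_mul]
        exact mul_le_mul_of_nonneg_left hJE (by positivity)
      have hsecond := (le_abs_self _).trans hstep
      have hqs : Real.sqrt 2 * Real.sqrt s * Real.sqrt d ≤ q := by
        rw [hq]
        gcongr
      have hsecond' : G * ‖v‖ * (1 + e + Real.sqrt 2 * Real.sqrt s * Real.sqrt d) * s ≤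
          G * ‖v‖ * (4 / 3 * (1 + e + q)) * s := by
        gcongr
        linarith
      have hfirst' : (L * ‖v‖ * L) * (s * M) ≤ (L * ‖v‖ * L) * (s * (4 / 3 * (1 + e + q))) := by
        gcongr
        rw [hM]; linarith
      have hsum : (L * ‖v‖ * L) * (s * (4 / 3 * (1 + e + q))) +
          G * ‖v‖ * (4 / 3 * (1 + e + q)) * s = ‖v‖ * (c * s) := by
        rw [hc]; ring
      rw [e2]
      linarith
    have hww := hdir w
    rw [real_inner_self_eq_norm_sq] at hww
    rcases eq_or_ne ‖w‖ 0 with h0 | h0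
    · rw [h0]; exact mul_nonneg hc0 hs0
    · have : 0 < ‖w‖ := lt_of_le_of_ne (norm_nonneg _) (Ne.symm h0)
      exact le_of_mul_le_mul_left (by rw [← pow_two]; exact hww) this
  -- Fubini
  have hXh := (hmom h hh0 le_rfl).1
  have hBh := (brownian_integrable hB hh0).1
  have huj : StronglyMeasurable (Function.uncurry fun s ω =>
      gradient f (X s ω) - gradient f (X 0 ω)) := by
    refine StronglyMeasurable.sub (hgc.comp_stronglyMeasurable hXj) ?_
    exact hgc.comp_stronglyMeasurable
      (((hX.adapted 0).mono (ℱ.le 0)).comp_measurable measurable_snd)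
  obtain ⟨hUi, -, -⟩ := prod_integrable_aux (P := P) huj (M := L * (M + e)) hh0
    (fun r hr0 hrh => by
      have hr := hmom r hr0 hrh
      have hd := (hgi _ hr.1).sub (hgi _ hX0i)
      refine ⟨hd, ?_⟩
      refine (integral_mono hd.norm ((hr.1.norm.add hX0i.norm).const_mul L) (fun ω => ?_)).trans ?_
      · refine (norm_sub_le _ _).trans ?_
        simp only [Pi.add_apply]
        rw [mul_add]
        exact add_le_add (hgL _) (hgL _)
      · rw [integral_const_mul]
        simp only [Pi.add_apply]
        rw [integral_add hr.1.norm hX0i.norm]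
        gcongr
        exact hr.2)
  have hmain : (∫ ω, (X 0 ω - h • gradient f (X 0 ω) + Real.sqrt 2 • B h ω) ∂P) -
      (∫ ω, X h ω ∂P) =
      ∫ s in (0:ℝ)..h, ∫ ω, (gradient f (X s ω) - gradient f (X 0 ω)) ∂P := by
    rw [intervalIntegral_integral_swap hUi, ← integral_sub _ hXh]
    · congr 1; ext1 ω
      rw [intervalIntegral.integral_sub (f := fun x => gradient f (X x ω))
        (g := fun _ => gradient f (X 0 ω)) ((hgc.comp (hX.cont ω)).intervalIntegrable _ _)
        (continuous_const.intervalIntegrable _ _), intervalIntegral.integral_const, sub_zero]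
      rw [hX.eqn ω h hh0]
      abel
    · exact (hX0i.sub ((hgi _ hX0i).smul h)).add (hBh.smul (Real.sqrt 2))
  have hnorm : ‖∫ s in (0:ℝ)..h, ∫ ω, (gradient f (X s ω) - gradient f (X 0 ω)) ∂P‖ ≤
      c * (h ^ 2 / 2) := by
    refine (intervalIntegral.norm_integral_le_of_norm_le hh0 (g := fun s => c * s)
      (Filter.Eventually.of_forall fun s hs => hweak s hs.1.le hs.2)
      ((continuous_const.mul continuous_id).intervalIntegrable _ _)).trans ?_
    rw [intervalIntegral.integral_const_mul, integral_id]
    simp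
  rw [hmain]
  refine hnorm.trans ?_
  set S := ∫ ω, ‖X 0 ω‖ ^ 2 ∂P with hS
  have heS : e ^ 2 ≤ S := mean_norm_sq_le hX0
  have hq2 : q ^ 2 ≤ 2 * (d / (4 * (L / m) * L)) := by
    rw [hq, mul_pow, mul_pow, Real.sq_sqrt (by norm_num), Real.sq_sqrt hh0,
      Real.sq_sqrt (Nat.cast_nonneg d)]
    linarith
  have hsq : 1 + e + q ≤ 2 * Real.sqrt (d / (4 * (L / m) * L) + S + 1) := by
    have h1 : (1 + e + q) / 2 ≤ Real.sqrt (d / (4 * (L / m) * L) + S + 1) := by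
      apply Real.le_sqrt_of_sq_le
      nlinarith [sq_nonneg (1 - e), sq_nonneg (q - 2), sq_nonneg (q - 2 * e)]
    linarith
  have hR : 0 ≤ Real.sqrt (d / (4 * (L / m) * L) + S + 1) := Real.sqrt_nonneg _
  calc c * (h ^ 2 / 2) = (L ^ 2 + G) * (2 / 3 * (1 + e + q)) * h ^ 2 := by rw [hc]; ring
    _ ≤ (L ^ 2 + G) * (2 * Real.sqrt (d / (4 * (L / m) * L) + S + 1)) * h ^ 2 := by
        refine mul_le_mul_of_nonneg_right (mul_le_mul_of_nonneg_left ?_ (by positivity))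
          (by positivity)
        linarith
    _ = _ := by ring
end

section
/- (Boundedness of LMC iterates, Lemma 7) Let f : ℝ^d → ℝ be twice continuously differentiable with m·I ≼ ∇²f(x) ≼ L·I for all x (0 < m ≤ L), κ = L/m, and ∇f(0) = 0. Let (x̄_k) be the LMC iterates with step size h started from a square-integrable x̄₀ = x₀. Then for every h with 0 ≤ h ≤ 1/(4κL) and every k ≥ 0: E‖x̄_k‖² ≤ E‖x₀‖² + 8d/(7m). -/
open MeasureTheory ProbabilityTheory Real
open scoped ENNReal NNReal

/-- Mean value: `⟨∇f(x), v⟩` is a second derivative `D²f(tx)(x,v)`. -/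
lemma lmc_mvt {d : ℕ} {f : Euc d → ℝ} (hf : ContDiff ℝ 2 f) (hgrad0 : gradient f 0 = 0)
    (x v : Euc d) : ∃ y : Euc d, inner ℝ (gradient f x) v = fderiv ℝ (fderiv ℝ f) y x v := by
  have hd : Differentiable ℝ (fderiv ℝ f) :=
    (hf.fderiv_right (m := 1) (by norm_num)).differentiable (by norm_num)
  have hder : ∀ t : ℝ, HasDerivAt (fun t : ℝ => fderiv ℝ f (t • x) v)
      (fderiv ℝ (fderiv ℝ f) (t • x) x v) t := by
    intro t
    have h1 : HasDerivAt (fun t : ℝ => t • x) x t := by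
      simpa using (hasDerivAt_id t).smul_const x
    have h2 := (hd (t • x)).hasFDerivAt.comp_hasDerivAt t h1
    simpa using h2.clm_apply (hasDerivAt_const t v)
  obtain ⟨c, -, hc⟩ := exists_hasDerivAt_eq_slope (fun t : ℝ => fderiv ℝ f (t • x) v)
    (fun t => fderiv ℝ (fderiv ℝ f) (t • x) x v) zero_lt_one
    (fun t _ => (hder t).continuousAt.continuousWithinAt) (fun t _ => hder t)
  refine ⟨c • x, ?_⟩
  have h0 : fderiv ℝ f 0 v = 0 := by
    rw [← inner_gradient_left, hgrad0, inner_zero_left]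
  rw [hc, inner_gradient_left]
  simp [h0]

lemma lmc_inner_ge {d : ℕ} {f : Euc d → ℝ} {m L : ℝ} (hf : ContDiff ℝ 2 f)
    (hHess : HessianBounds m L f) (hgrad0 : gradient f 0 = 0) (x : Euc d) :
    m * ‖x‖ ^ 2 ≤ inner ℝ (gradient f x) x := by
  obtain ⟨y, hy⟩ := lmc_mvt hf hgrad0 x x
  have := (hHess y x).1
  rw [iteratedFDeriv_two_apply] at this
  rw [hy]
  simpa using this

lemma lmc_grad_le {d : ℕ} {f : Euc d → ℝ} {m L : ℝ} (hm : 0 < m) (hmL : m ≤ L)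
    (hf : ContDiff ℝ 2 f)
    (hHess : HessianBounds m L f) (hgrad0 : gradient f 0 = 0) (x : Euc d) :
    ‖gradient f x‖ ^ 2 ≤ L ^ 2 * ‖x‖ ^ 2 := by
  set v := gradient f x with hv
  obtain ⟨y, hy⟩ := lmc_mvt hf hgrad0 x v
  have hs : fderiv ℝ (fderiv ℝ f) y x v = fderiv ℝ (fderiv ℝ f) y v x :=
    (hf.contDiffAt.isSymmSndFDerivAt (by simp)) x v
  have h1 := (hHess y (v - L • x)).1
  have h2 := (hHess y v).2
  have h3 := (hHess y x).2
  rw [iteratedFDeriv_two_apply] at h1 h2 h3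
  simp at h1 h2 h3
  rw [← hv, real_inner_self_eq_norm_sq] at hy
  have hL : 0 < L := hm.trans_le hmL
  have h0 : 0 ≤ m * ‖v - L • x‖ ^ 2 := by positivity
  have h4 : L * ‖v‖ ^ 2 ≤ L * (L ^ 2 * ‖x‖ ^ 2) := by
    nlinarith [mul_le_mul_of_nonneg_left h3 (sq_nonneg L)]
  exact le_of_mul_le_mul_left h4 hL

lemma lmc_grad_cont {d : ℕ} {f : Euc d → ℝ} (hf : ContDiff ℝ 2 f) :
    Continuous (gradient f) := by
  have : Continuous (fderiv ℝ f) := hf.continuous_fderiv (by norm_num)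
  exact (InnerProductSpace.toDual ℝ (Euc d)).symm.continuous.comp this

lemma lmc_drift_le {d : ℕ} {f : Euc d → ℝ} {m L : ℝ} (hm : 0 < m) (hmL : m ≤ L)
    (hf : ContDiff ℝ 2 f)
    (hHess : HessianBounds m L f) (hgrad0 : gradient f 0 = 0)
    {h : ℝ} (hh0 : 0 ≤ h) (hh1 : h ≤ 1 / (4 * (L / m) * L)) (x : Euc d) :
    ‖x - h • gradient f x‖ ^ 2 ≤ (1 - 7 / 4 * (h * m)) * ‖x‖ ^ 2 := by
  have hL : 0 < L := hm.trans_le hmL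
  have h1 := lmc_inner_ge hf hHess hgrad0 x
  have h2 := lmc_grad_le hm hmL hf hHess hgrad0 x
  have h3 : h * L ^ 2 ≤ m / 4 := by
    have : 1 / (4 * (L / m) * L) * L ^ 2 = m / 4 := by field_simp
    rw [← this]; gcongr
  rw [norm_sub_sq_real, inner_smul_right, norm_smul, mul_pow, real_inner_comm,
    Real.norm_eq_abs, sq_abs]
  have h4 : h ^ 2 * ‖gradient f x‖ ^ 2 ≤ h * (m / 4) * ‖x‖ ^ 2 := by
    calc h ^ 2 * ‖gradient f x‖ ^ 2 ≤ h ^ 2 * (L ^ 2 * ‖x‖ ^ 2) := by gcongr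
      _ = h * (h * L ^ 2) * ‖x‖ ^ 2 := by ring
      _ ≤ _ := by gcongr
  nlinarith [mul_le_mul_of_nonneg_left h1 hh0]

lemma lmc_hm_le {m L : ℝ} (hm : 0 < m) (hmL : m ≤ L)
    {h : ℝ} (hh1 : h ≤ 1 / (4 * (L / m) * L)) : h * m ≤ 1 / 4 := by
  have hL : 0 < L := hm.trans_le hmL
  calc h * m ≤ 1 / (4 * (L / m) * L) * m := by gcongr
    _ = m ^ 2 / (4 * L ^ 2) := by field_simp
    _ ≤ 1 / 4 := by
      rw [div_le_div_iff₀ (by positivity) (by norm_num)]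
      nlinarith

lemma lmc_coord_law (d : ℕ) (i : Fin d) :
    (_root_.stdGaussian d).map (fun x : Euc d => x i) = gaussianReal 0 1 := by
  unfold _root_.stdGaussian
  rw [Measure.map_map (by fun_prop) (by fun_prop)]
  exact (measurePreserving_eval (fun _ : Fin d => gaussianReal 0 1) i).map_eq

section
variable {d : ℕ} {Ω : Type*} {mΩ : MeasurableSpace Ω} {P : Measure Ω} [IsProbabilityMeasure P]

lemma lmc_coord_law' {ξ : Ω → Euc d} (hm : Measurable ξ) (hl : P.map ξ = _root_.stdGaussian d)
    (i : Fin d) : P.map (fun ω => ξ ω i) = gaussianReal 0 1 := by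
  rw [← lmc_coord_law d i, ← hl, Measure.map_map (by fun_prop) hm]
  rfl

lemma lmc_coord_memLp {ξ : Ω → Euc d} (hm : Measurable ξ)
    (hl : P.map ξ = _root_.stdGaussian d) (i : Fin d) : MemLp (fun ω => ξ ω i) 2 P := by
  have h := memLp_id_gaussianReal (μ := 0) (v := 1) 2
  rw [← lmc_coord_law' hm hl i] at h
  exact (memLp_map_measure_iff h.1 (by fun_prop)).1 h

lemma lmc_coord_mean {ξ : Ω → Euc d} (hm : Measurable ξ)
    (hl : P.map ξ = _root_.stdGaussian d) (i : Fin d) : ∫ ω, ξ ω i ∂P = 0 := by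
  have h := integral_id_gaussianReal (μ := 0) (v := 1)
  rw [← lmc_coord_law' hm hl i, integral_map (by fun_prop) (by fun_prop)] at h
  exact h

lemma lmc_coord_sq {ξ : Ω → Euc d} (hm : Measurable ξ)
    (hl : P.map ξ = _root_.stdGaussian d) (i : Fin d) : ∫ ω, (ξ ω i) ^ 2 ∂P = 1 := by
  have h := variance_id_gaussianReal (μ := 0) (v := 1)
  rw [variance_of_integral_eq_zero (by fun_prop) (by simp), ← lmc_coord_law' hm hl i,
    integral_map (by fun_prop) (by fun_prop)] at h
  simpa using h

lemma lmc_memLp_of_coord {X : Ω → Euc d} (h : ∀ i, MemLp (fun ω => X ω i) 2 P) :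
    MemLp X 2 P := by
  exact MemLp.of_eval_piLp h

lemma lmc_coord_of_memLp {X : Ω → Euc d} (h : MemLp X 2 P) (i : Fin d) :
    MemLp (fun ω => X ω i) 2 P := h.eval_piLp i

lemma lmc_noise_step {Y ξ : Ω → Euc d} (hY : MemLp Y 2 P) (hm : Measurable ξ)
    (hl : P.map ξ = _root_.stdGaussian d) (hind : IndepFun Y ξ P) (c : ℝ) :
    MemLp (fun ω => Y ω + c • ξ ω) 2 P ∧
    ∫ ω, ‖Y ω + c • ξ ω‖ ^ 2 ∂P = ∫ ω, ‖Y ω‖ ^ 2 ∂P + c ^ 2 * d := by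
  have hξ : MemLp ξ 2 P := lmc_memLp_of_coord (lmc_coord_memLp hm hl)
  refine ⟨hY.add (hξ.const_smul c), ?_⟩
  have hYi := fun i => lmc_coord_of_memLp hY i
  have hξi := fun i => lmc_coord_memLp hm hl i
  have hmul : ∀ i, Integrable (fun ω => Y ω i * ξ ω i) P := fun i =>
    (hYi i).integrable_mul (hξi i)
  have key : ∀ i, ∫ ω, (Y ω i + c * ξ ω i) ^ 2 ∂P = ∫ ω, (Y ω i) ^ 2 ∂P + c ^ 2 := by
    intro i
    have hi : IndepFun (fun ω => Y ω i) (fun ω => ξ ω i) P :=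
      hind.comp (φ := fun x : Euc d => x i) (ψ := fun x : Euc d => x i)
        (by fun_prop) (by fun_prop)
    have hz := hi.integral_fun_mul_eq_mul_integral (hYi i).1 (hξi i).1
    rw [lmc_coord_mean hm hl i, mul_zero] at hz
    have e : ∀ ω, (Y ω i + c * ξ ω i) ^ 2
        = (Y ω i) ^ 2 + (2 * c * (Y ω i * ξ ω i) + c ^ 2 * (ξ ω i) ^ 2) := fun ω => by ring
    simp_rw [e]
    have i2 : Integrable (fun ω => 2 * c * (Y ω i * ξ ω i) + c ^ 2 * (ξ ω i) ^ 2) P :=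
      ((hmul i).const_mul _).add ((hξi i).integrable_sq.const_mul _)
    rw [integral_add (hYi i).integrable_sq i2,
      integral_add ((hmul i).const_mul _) ((hξi i).integrable_sq.const_mul _),
      integral_const_mul, integral_const_mul, hz, lmc_coord_sq hm hl i]
    ring
  simp_rw [EuclideanSpace.real_norm_sq_eq]
  have hsum : ∀ i, Integrable (fun ω => ((Y ω + c • ξ ω) i) ^ 2) P := fun i =>
    (lmc_coord_of_memLp (hY.add (hξ.const_smul c)) i).integrable_sq
  rw [integral_finsetSum _ (fun i _ => hsum i),
    integral_finsetSum _ (fun i _ => (hYi i).integrable_sq)]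
  have : ∀ i, ∫ ω, ((Y ω + c • ξ ω) i) ^ 2 ∂P = ∫ ω, (Y ω i) ^ 2 ∂P + c ^ 2 := by
    intro i; rw [← key i]; simp
  simp_rw [this]
  rw [Finset.sum_add_distrib]
  simp [mul_comm]

lemma lmc_meas
    {f : Euc d → ℝ} {m L : ℝ}
    (hm : 0 < m) (hmL : m ≤ L) (hf : ContDiff ℝ 2 f) (hHess : HessianBounds m L f)
    (hgrad0 : gradient f 0 = 0)
    {x0 : Ω → Euc d} (hx0 : MemLp x0 2 P) (hx0m : Measurable x0)
    {ξ : ℕ → Ω → Euc d} (hξmeas : ∀ k, Measurable (ξ k))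
    (hξlaw : ∀ k, P.map (ξ k) = _root_.stdGaussian d)
    (hindep : iIndepFun (fun i : Option ℕ => i.elim x0 ξ) P)
    {h : ℝ} (hh0 : 0 ≤ h) (hh1 : h ≤ 1 / (4 * (L / m) * L))
    {Xb : ℕ → Ω → Euc d} (hXb0 : Xb 0 = x0)
    (hXb : ∀ k : ℕ, Xb (k + 1) =
      fun ω => Xb k ω - h • gradient f (Xb k ω) + Real.sqrt (2 * h) • ξ (k + 1) ω)
    (k : ℕ) :
    MemLp (Xb k) 2 P ∧
      ∫ ω, ‖Xb k ω‖ ^ 2 ∂P ≤ (∫ ω, ‖x0 ω‖ ^ 2 ∂P) + 8 * d / (7 * m) := by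
  have hgc := lmc_grad_cont hf
  set F : Option ℕ → Ω → Euc d := fun i => i.elim x0 ξ with hF
  have hFm : ∀ i, Measurable (F i) := by
    intro i; cases i with
    | none => exact hx0m
    | some n => exact hξmeas n
  set M : Option ℕ → MeasurableSpace Ω := fun i => MeasurableSpace.comap (F i) inferInstance
    with hM
  set S : ℕ → Set (Option ℕ) := fun k => {i | ∀ n, i = some n → n ≤ k} with hS
  have hFM : ∀ k, ∀ i ∈ S k, Measurable[⨆ i ∈ S k, M i] (F i) := by
    intro k i hi
    exact (comap_measurable (F i)).mono (le_iSup₂_of_le (f := fun i _ => M i) i hi le_rfl) le_rfl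
  have hmono : ∀ k, (⨆ i ∈ S k, M i) ≤ ⨆ i ∈ S (k + 1), M i := by
    intro k
    exact biSup_mono fun i hi n hn => (hi n hn).trans (Nat.le_succ k)
  have hXM : ∀ k, Measurable[⨆ i ∈ S k, M i] (Xb k) := by
    intro k
    induction k with
    | zero =>
      rw [hXb0]
      exact hFM 0 none (by intro n hn; cases hn)
    | succ k ih =>
      have ih' : Measurable[⨆ i ∈ S (k + 1), M i] (Xb k) := ih.mono (hmono k) le_rfl
      have hx : Measurable[⨆ i ∈ S (k + 1), M i] (ξ (k + 1)) :=
        hFM (k + 1) (some (k + 1)) (by intro n hn; cases hn; rfl)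
      rw [hXb k]
      have h1 : Measurable[⨆ i ∈ S (k + 1), M i] (fun ω => √(2 * h) • ξ (k + 1) ω) :=
        hx.const_smul (√(2 * h))
      exact (ih'.sub ((hgc.measurable.comp ih').const_smul h)).add h1
  have hind : ∀ k, IndepFun (Xb k) (ξ (k + 1)) P := by
    intro k
    have h1 := indep_iSup_of_disjoint (fun i => (hFm i).comap_le)
      ((iIndepFun_iff_iIndep _ _ _).1 hindep) (S := S k) (T := {some (k + 1)}) (by
        rw [Set.disjoint_singleton_right]
        intro hc
        have := hc _ rfl
        omega)
    rw [IndepFun_iff_Indep]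
    refine indep_of_indep_of_le_left (indep_of_indep_of_le_right h1 ?_) (hXM k).comap_le
    simp [hF]
  induction k with
  | zero =>
    rw [hXb0]
    refine ⟨hx0, ?_⟩
    have : 0 ≤ 8 * (d : ℝ) / (7 * m) := by positivity
    linarith
  | succ k ih =>
    obtain ⟨ihL, ihb⟩ := ih
    have hle := lmc_drift_le hm hmL hf hHess hgrad0 hh0 hh1
    have hhm := lmc_hm_le hm hmL hh1
    have hhm0 : 0 ≤ h * m := by positivity
    have hφm : Measurable (fun x : Euc d => x - h • gradient f x) :=
      (continuous_id.sub (hgc.const_smul h)).measurable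
    have hYL : MemLp (fun ω => Xb k ω - h • gradient f (Xb k ω)) 2 P := by
      refine MemLp.of_le ihL
        ((hφm.comp_aemeasurable ihL.1.aemeasurable).aestronglyMeasurable) ?_
      refine Filter.Eventually.of_forall fun ω => ?_
      refine (sq_le_sq₀ (norm_nonneg _) (norm_nonneg _)).1 ((hle (Xb k ω)).trans ?_)
      nlinarith [sq_nonneg ‖Xb k ω‖, mul_nonneg hhm0 (sq_nonneg ‖Xb k ω‖)]
    have hYi : IndepFun (fun ω => Xb k ω - h • gradient f (Xb k ω)) (ξ (k + 1)) P :=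
      (hind k).comp hφm measurable_id
    obtain ⟨hL', he⟩ := lmc_noise_step hYL (hξmeas (k + 1)) (hξlaw (k + 1)) hYi (√(2 * h))
    rw [hXb k]
    refine ⟨hL', ?_⟩
    rw [he, Real.sq_sqrt (by positivity)]
    have hint : ∫ ω, ‖Xb k ω - h • gradient f (Xb k ω)‖ ^ 2 ∂P
        ≤ (1 - 7 / 4 * (h * m)) * ∫ ω, ‖Xb k ω‖ ^ 2 ∂P := by
      rw [← integral_const_mul]
      exact integral_mono (hYL.integrable_norm_pow (by norm_num))
        ((ihL.integrable_norm_pow (by norm_num)).const_mul _) (fun ω => hle (Xb k ω))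
    have hA : 0 ≤ ∫ ω, ‖x0 ω‖ ^ 2 ∂P := integral_nonneg fun ω => by positivity
    set A := ∫ ω, ‖x0 ω‖ ^ 2 ∂P
    have hC : 2 * h * d = 7 / 4 * (h * m) * (8 * d / (7 * m)) := by field_simp; ring
    have h5 : (1 - 7 / 4 * (h * m)) * ∫ ω, ‖Xb k ω‖ ^ 2 ∂P
        ≤ (1 - 7 / 4 * (h * m)) * (A + 8 * d / (7 * m)) :=
      mul_le_mul_of_nonneg_left ihb (by linarith)
    rw [hC]
    nlinarith [mul_nonneg hhm0 hA]

end

/-- **Boundedness of LMC iterates** (Lemma 7).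
Let `f` be `m`-strongly convex and `L`-smooth (`0 < m ≤ L`) with `∇f(0) = 0`, and let
`x̄_k` be the LMC iterates `x̄_k = x̄_{k-1} - h ∇f(x̄_{k-1}) + √(2h) ξ_k` with i.i.d. standard
Gaussian vectors `ξ₁, ξ₂, …` independent of the square-integrable initial value `x̄₀ = x₀`.
Then for every `0 ≤ h ≤ 1/(4κL)` (where `κ = L/m`) and every `k`:
`E‖x̄_k‖² ≤ E‖x₀‖² + 8d/(7m)`. -/
theorem lmc_iterates_bounded
    {d : ℕ} {Ω : Type*} {mΩ : MeasurableSpace Ω} {P : Measure Ω} [IsProbabilityMeasure P]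
    {f : Euc d → ℝ} {m L : ℝ}
    (hm : 0 < m) (hmL : m ≤ L) (hf : ContDiff ℝ 2 f) (hHess : HessianBounds m L f)
    (hgrad0 : gradient f 0 = 0)
    {x0 : Ω → Euc d} (hx0 : MemLp x0 2 P)
    {ξ : ℕ → Ω → Euc d} (hξmeas : ∀ k, Measurable (ξ k))
    (hξlaw : ∀ k, P.map (ξ k) = stdGaussian d)
    (hindep : iIndepFun (fun i : Option ℕ => i.elim x0 ξ) P)
    {h : ℝ} (hh0 : 0 ≤ h) (hh1 : h ≤ 1 / (4 * (L / m) * L))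
    {Xb : ℕ → Ω → Euc d} (hXb0 : Xb 0 = x0)
    (hXb : ∀ k : ℕ, Xb (k + 1) =
      fun ω => Xb k ω - h • gradient f (Xb k ω) + Real.sqrt (2 * h) • ξ (k + 1) ω)
    (k : ℕ) :
    (∫⁻ ω, (‖Xb k ω‖₊ : ℝ≥0∞) ^ 2 ∂P) ≤
      ENNReal.ofReal ((∫ ω, ‖x0 ω‖ ^ 2 ∂P) + 8 * d / (7 * m)) := by
  classical
  set x0' : Ω → Euc d := hx0.1.mk x0 with hx0'
  have hae : x0 =ᵐ[P] x0' := hx0.1.ae_eq_mk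
  have hx0m : Measurable x0' := hx0.1.stronglyMeasurable_mk.measurable
  let X' : ℕ → Ω → Euc d := fun n => Nat.rec x0' (fun k Y =>
    fun ω => Y ω - h • gradient f (Y ω) + Real.sqrt (2 * h) • ξ (k + 1) ω) n
  have hind' : iIndepFun (fun i : Option ℕ => i.elim x0' ξ) P := by
    refine hindep.congr fun i => ?_
    cases i with
    | none => exact hae
    | some n => exact Filter.EventuallyEq.rfl
  obtain ⟨hL, hb⟩ := lmc_meas hm hmL hf hHess hgrad0 (hx0.ae_eq hae) hx0m hξmeas hξlaw hind'
    hh0 hh1 (Xb := X') rfl (fun _ => rfl) k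
  have hXX : ∀ k, Xb k =ᵐ[P] X' k := by
    intro k
    induction k with
    | zero => rw [hXb0]; exact hae
    | succ k ih =>
      rw [hXb k]
      filter_upwards [ih] with ω hω
      simp only [hω]
      rfl
  have e1 : (∫⁻ ω, (‖Xb k ω‖₊ : ℝ≥0∞) ^ 2 ∂P) = ∫⁻ ω, ENNReal.ofReal (‖X' k ω‖ ^ 2) ∂P := by
    refine lintegral_congr_ae ?_
    filter_upwards [hXX k] with ω hω
    rw [hω, ENNReal.ofReal_pow (norm_nonneg _), ofReal_norm]
    rfl
  have e2 : ∫ ω, ‖x0 ω‖ ^ 2 ∂P = ∫ ω, ‖x0' ω‖ ^ 2 ∂P := by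
    refine integral_congr_ae ?_
    filter_upwards [hae] with ω hω
    rw [hω]
  rw [e1, e2, ← ofReal_integral_eq_lintegral_ofReal (hL.integrable_norm_pow (by norm_num))
    (Filter.Eventually.of_forall fun ω => by positivity)]
  exact ENNReal.ofReal_le_ofReal hb
end

section
/- (One-step second-moment recursion for LMC) Let f : ℝ^d → ℝ be twice continuously differentiable with m·I ≼ ∇²f(x) ≼ L·I for all x (0 < m ≤ L), κ = L/m, and ∇f(0) = 0. Let (x̄_k) be the LMC iterates with step size h started from a square-integrable initial value. Then for every h with 0 ≤ h ≤ 1/(4κL) and every k ≥ 0: E‖x̄_{k+1}‖² ≤ (1 − (7/4)mh) E‖x̄_k‖² + 2hd. -/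
open MeasureTheory ProbabilityTheory Real
open scoped ENNReal NNReal

lemma hess_bilin {d : ℕ} {f : Euc d → ℝ} {m L : ℝ} (hm : 0 < m)
    (hf : ContDiff ℝ 2 f) (hHess : HessianBounds m L f) (x u v : Euc d) :
    fderiv ℝ (fderiv ℝ f) x u v ≤ L * ‖u‖ * ‖v‖ := by
  have hq : ∀ w : Euc d, 0 ≤ fderiv ℝ (fderiv ℝ f) x w w ∧
      fderiv ℝ (fderiv ℝ f) x w w ≤ L * ‖w‖ ^ 2 := by
    intro w
    have := hHess x w
    simp only [iteratedFDeriv_two_apply, Matrix.cons_val_zero, Matrix.cons_val_one] at this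
    exact ⟨le_trans (by positivity) this.1, this.2⟩
  have hsymm : fderiv ℝ (fderiv ℝ f) x u v = fderiv ℝ (fderiv ℝ f) x v u :=
    (hf.contDiffAt.isSymmSndFDerivAt (by simp)) u v
  rcases eq_or_ne u 0 with rfl | hu
  · simp
  rcases eq_or_ne v 0 with rfl | hv
  · simp
  have hu' : 0 < ‖u‖ := norm_pos_iff.2 hu
  have hv' : 0 < ‖v‖ := norm_pos_iff.2 hv
  have h1 := (hq (‖v‖ • u + ‖u‖ • v)).2
  have h2 := (hq (‖v‖ • u - ‖u‖ • v)).1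
  have hL : 0 ≤ L := by
    have := (hq u).1.trans (hq u).2
    exact nonneg_of_mul_nonneg_left this (by positivity)
  have h3 : ‖‖v‖ • u + ‖u‖ • v‖ ≤ 2 * (‖u‖ * ‖v‖) := by
    refine (norm_add_le _ _).trans (le_of_eq ?_)
    rw [norm_smul, norm_smul, norm_norm, norm_norm]; ring
  have h4 : L * ‖‖v‖ • u + ‖u‖ • v‖ ^ 2 ≤ L * (2 * (‖u‖ * ‖v‖)) ^ 2 := by gcongr
  simp only [map_add, map_sub, map_smul, ContinuousLinearMap.add_apply,
    ContinuousLinearMap.sub_apply, ContinuousLinearMap.smul_apply, smul_eq_mul] at h1 h2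
  rw [← hsymm] at h1 h2
  have hp : 0 < 4 * (‖u‖ * ‖v‖) := by positivity
  refine le_of_mul_le_mul_left ?_ hp
  nlinarith

lemma grad_mvt {d : ℕ} {f : Euc d → ℝ} (hf : ContDiff ℝ 2 f)
    (hgrad0 : gradient f 0 = 0) (x v : Euc d) :
    ∃ y, inner ℝ (gradient f x) v = fderiv ℝ (fderiv ℝ f) y x v := by
  have hd : Differentiable ℝ (fderiv ℝ f) :=
    (hf.fderiv_right (m := 1) (by norm_num)).differentiable (by norm_num)
  have hder : ∀ t : ℝ, HasDerivAt (fun t : ℝ => fderiv ℝ f (t • x) v)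
      (fderiv ℝ (fderiv ℝ f) (t • x) x v) t := by
    intro t
    have h1 : HasDerivAt (fun t : ℝ => t • x) x t := by
      simpa using (hasDerivAt_id t).smul_const x
    have h2 := (hd (t • x)).hasFDerivAt.comp_hasDerivAt t h1
    simpa using h2.clm_apply (hasDerivAt_const t v)
  obtain ⟨c, -, hc⟩ := exists_hasDerivAt_eq_slope (fun t : ℝ => fderiv ℝ f (t • x) v)
    (fun t => fderiv ℝ (fderiv ℝ f) (t • x) x v) (a := 0) (b := 1) one_pos
    (fun t _ => (hder t).continuousAt.continuousWithinAt) (fun t _ => hder t)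
  refine ⟨c • x, ?_⟩
  have h0 : fderiv ℝ f 0 v = 0 := by
    rw [← inner_gradient_left (𝕜 := ℝ), hgrad0, inner_zero_left]
  rw [hc]
  simp [h0]

lemma step_contract {d : ℕ} {f : Euc d → ℝ} {m L h : ℝ} (hm : 0 < m) (hmL : m ≤ L)
    (hf : ContDiff ℝ 2 f) (hHess : HessianBounds m L f) (hgrad0 : gradient f 0 = 0)
    (hh0 : 0 ≤ h) (hh1 : h ≤ 1 / (4 * (L / m) * L)) (x : Euc d) :
    ‖x - h • gradient f x‖ ^ 2 ≤ (1 - 7 / 4 * m * h) * ‖x‖ ^ 2 := by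
  have hL : 0 < L := hm.trans_le hmL
  have h1 : m * ‖x‖ ^ 2 ≤ inner ℝ (gradient f x) x := by
    obtain ⟨y, hy⟩ := grad_mvt hf hgrad0 x x
    have := (hHess y x).1
    simp only [iteratedFDeriv_two_apply, Matrix.cons_val_zero, Matrix.cons_val_one] at this
    rwa [hy]
  have h2 : ‖gradient f x‖ ≤ L * ‖x‖ := by
    obtain ⟨y, hy⟩ := grad_mvt hf hgrad0 x (gradient f x)
    have := hess_bilin hm hf hHess y x (gradient f x)
    rw [← hy, real_inner_self_eq_norm_sq] at this
    by_contra! hc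
    have : 0 < ‖gradient f x‖ := lt_of_le_of_lt (by positivity) hc
    nlinarith
  have h3 : ‖gradient f x‖ ^ 2 ≤ L ^ 2 * ‖x‖ ^ 2 := by
    rw [← mul_pow]; gcongr
  have h4 : 4 * L ^ 2 * h ≤ m := by
    have : 1 / (4 * (L / m) * L) = m / (4 * L ^ 2) := by field_simp
    rw [this, le_div_iff₀ (by positivity)] at hh1
    linarith
  rw [norm_sub_sq_real, norm_smul, inner_smul_right, real_inner_comm, mul_pow, Real.norm_eq_abs, sq_abs]
  have h5 : h ^ 2 * ‖gradient f x‖ ^ 2 ≤ h ^ 2 * (L ^ 2 * ‖x‖ ^ 2) := by gcongr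
  have h6 : h * (m * ‖x‖ ^ 2) ≤ h * inner ℝ (gradient f x) x := by gcongr
  have h7 : (h * ‖x‖ ^ 2) * (4 * L ^ 2 * h) ≤ (h * ‖x‖ ^ 2) * m := by gcongr
  nlinarith

lemma gauss_one (a s : ℝ) :
    ∫⁻ z, ENNReal.ofReal ((a + s * z) ^ 2) ∂(gaussianReal 0 1) = ENNReal.ofReal (a ^ 2 + s ^ 2) := by
  have hL : MemLp (fun z : ℝ => z) 2 (gaussianReal 0 1) := memLp_id_gaussianReal' 2 (by simp)
  have hi1 : Integrable (fun z : ℝ => z) (gaussianReal 0 1) := hL.integrable (by norm_num)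
  have hi2 : Integrable (fun z : ℝ => z ^ 2) (gaussianReal 0 1) := hL.integrable_sq
  have hm : ∫ z, z ∂(gaussianReal 0 1) = 0 := integral_id_gaussianReal
  have hv : ∫ z, z ^ 2 ∂(gaussianReal 0 1) = 1 := by
    have := variance_of_integral_eq_zero (μ := gaussianReal 0 1) (X := fun z : ℝ => z)
      hL.aemeasurable hm
    rw [variance_fun_id_gaussianReal] at this
    simpa using this.symm
  have he : (fun z : ℝ => (a + s * z) ^ 2) = fun z => (a ^ 2 + 2 * a * s * z) + s ^ 2 * z ^ 2 := by
    ext z; ring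
  have hi3 : Integrable (fun z : ℝ => a ^ 2 + 2 * a * s * z) (gaussianReal 0 1) :=
    (integrable_const _).add (hi1.const_mul _)
  have hint : Integrable (fun z : ℝ => (a + s * z) ^ 2) (gaussianReal 0 1) := by
    rw [he]
    exact hi3.add (hi2.const_mul _)
  rw [← ofReal_integral_eq_lintegral_ofReal hint (ae_of_all _ fun z => sq_nonneg _), he,
    integral_add hi3 (hi2.const_mul _),
    integral_add (integrable_const _) (hi1.const_mul _), integral_const_mul, integral_const_mul,
    hm, hv]
  simp

lemma nnnorm_sq_ofReal {E : Type*} [SeminormedAddCommGroup E] (x : E) :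
    (‖x‖₊ : ℝ≥0∞) ^ 2 = ENNReal.ofReal (‖x‖ ^ 2) := by
  rw [ENNReal.ofReal_pow (norm_nonneg _), ofReal_norm_eq_enorm]; rfl

lemma gauss_vec {d : ℕ} (y : Euc d) (s : ℝ) :
    ∫⁻ z, (‖y + s • z‖₊ : ℝ≥0∞) ^ 2 ∂(_root_.stdGaussian d) =
      (‖y‖₊ : ℝ≥0∞) ^ 2 + ENNReal.ofReal (s ^ 2 * d) := by
  have hmeas : Measurable (EuclideanSpace.equiv (Fin d) ℝ).symm :=
    (EuclideanSpace.equiv (Fin d) ℝ).symm.continuous.measurable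
  rw [_root_.stdGaussian, lintegral_map (by fun_prop) hmeas]
  have h1 : ∀ z : Fin d → ℝ,
      (‖y + s • (EuclideanSpace.equiv (Fin d) ℝ).symm z‖₊ : ℝ≥0∞) ^ 2 =
      ∑ i, ENNReal.ofReal ((y i + s * z i) ^ 2) := by
    intro z
    rw [nnnorm_sq_ofReal, EuclideanSpace.real_norm_sq_eq,
      ENNReal.ofReal_sum_of_nonneg (fun i _ => sq_nonneg _)]
    rfl
  simp_rw [h1]
  rw [lintegral_finsetSum _ (fun i _ => by fun_prop)]
  have h2 : ∀ i : Fin d, ∫⁻ z : Fin d → ℝ, ENNReal.ofReal ((y i + s * z i) ^ 2)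
      ∂(Measure.pi fun _ : Fin d => gaussianReal 0 1) = ENNReal.ofReal (y i ^ 2 + s ^ 2) := by
    intro i
    rw [← gauss_one]
    exact (measurePreserving_eval (fun _ : Fin d => gaussianReal 0 1) i).lintegral_comp
      (f := fun t => ENNReal.ofReal ((y i + s * t) ^ 2)) (by fun_prop)
  simp_rw [h2]
  rw [← ENNReal.ofReal_sum_of_nonneg (fun i _ => by positivity), nnnorm_sq_ofReal,
    EuclideanSpace.real_norm_sq_eq, ← ENNReal.ofReal_add (by positivity) (by positivity),
    Finset.sum_add_distrib]
  simp [mul_comm]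

lemma iter_repr {d : ℕ} {Ω : Type*} {g : Euc d → Euc d} (hg : Measurable g) {s : ℝ}
    {F : Option ℕ → Ω → Euc d} {Xb : ℕ → Ω → Euc d} (hXb0 : Xb 0 = F none)
    (hXb : ∀ k : ℕ, Xb (k + 1) = fun ω => g (Xb k ω) + s • F (some (k + 1)) ω)
    (S : Finset (Option ℕ)) (hS0 : none ∈ S) (k : ℕ) (hS : ∀ j ≤ k, some j ∈ S) :
    ∃ G : (S → Euc d) → Euc d, Measurable G ∧ Xb k = fun ω => G (fun i => F i ω) := by
  induction k with
  | zero => exact ⟨fun z => z ⟨none, hS0⟩, measurable_pi_apply _, hXb0⟩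
  | succ k ih =>
    obtain ⟨G, hG, hk⟩ := ih (fun j hj => hS j (by omega))
    refine ⟨fun z => g (G z) + s • z ⟨some (k + 1), hS _ le_rfl⟩, ?_, ?_⟩
    · exact (hg.comp hG).add ((measurable_pi_apply _).const_smul s)
    · rw [hXb, hk]

/-- **One-step second-moment recursion for LMC**.
Let `f` be `m`-strongly convex and `L`-smooth (`0 < m ≤ L`) with `∇f(0) = 0`, and let
`x̄_k` be the LMC iterates `x̄_k = x̄_{k-1} - h ∇f(x̄_{k-1}) + √(2h) ξ_k` with i.i.d. standard
Gaussian vectors `ξ₁, ξ₂, …` independent of the square-integrable initial value `x̄₀ = x₀`.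
Then for every `0 ≤ h ≤ 1/(4κL)` (where `κ = L/m`) and every `k`:
`E‖x̄_{k+1}‖² ≤ (1 - (7/4) m h) E‖x̄_k‖² + 2 h d`. -/
theorem lmc_one_step_second_moment_recursion
    {d : ℕ} {Ω : Type*} {mΩ : MeasurableSpace Ω} {P : Measure Ω} [IsProbabilityMeasure P]
    {f : Euc d → ℝ} {m L : ℝ}
    (hm : 0 < m) (hmL : m ≤ L) (hf : ContDiff ℝ 2 f) (hHess : HessianBounds m L f)
    (hgrad0 : gradient f 0 = 0)
    {x0 : Ω → Euc d} (hx0 : MemLp x0 2 P)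
    {ξ : ℕ → Ω → Euc d} (hξmeas : ∀ k, Measurable (ξ k))
    (hξlaw : ∀ k, P.map (ξ k) = stdGaussian d)
    (hindep : iIndepFun (fun i : Option ℕ => i.elim x0 ξ) P)
    {h : ℝ} (hh0 : 0 ≤ h) (hh1 : h ≤ 1 / (4 * (L / m) * L))
    {Xb : ℕ → Ω → Euc d} (hXb0 : Xb 0 = x0)
    (hXb : ∀ k : ℕ, Xb (k + 1) =
      fun ω => Xb k ω - h • gradient f (Xb k ω) + Real.sqrt (2 * h) • ξ (k + 1) ω)
    (k : ℕ) :
    (∫⁻ ω, (‖Xb (k + 1) ω‖₊ : ℝ≥0∞) ^ 2 ∂P) ≤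
      ENNReal.ofReal (1 - 7 / 4 * m * h) * (∫⁻ ω, (‖Xb k ω‖₊ : ℝ≥0∞) ^ 2 ∂P) +
        ENNReal.ofReal (2 * h * d) := by
  have hgm : Measurable (gradient f) := by
    have : Continuous (gradient f) := by
      unfold gradient
      exact (InnerProductSpace.toDual ℝ (Euc d)).symm.continuous.comp
        (hf.continuous_fderiv (by norm_num))
    exact this.measurable
  have hg : Measurable (fun x : Euc d => x - h • gradient f x) :=
    measurable_id.sub (hgm.const_smul h)
  set F : Option ℕ → Ω → Euc d := fun i => i.elim x0 ξ with hF
  have hFm : ∀ i, AEMeasurable (F i) P := by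
    rintro (_ | i)
    · exact hx0.aestronglyMeasurable.aemeasurable
    · exact (hξmeas i).aemeasurable
  let S : Finset (Option ℕ) := Finset.insertNone (Finset.range (k + 1))
  obtain ⟨G, hG, hk⟩ := iter_repr (F := F) hg hXb0 hXb S (by simp [S]) k
    (fun j hj => by simp [S]; omega)
  have hdisj : Disjoint S {some (k + 1)} := by simp [S]
  have hind0 := hindep.indepFun_finset₀ S {some (k + 1)} hdisj hFm
  have hind : IndepFun (fun ω => Xb k ω - h • gradient f (Xb k ω)) (ξ (k + 1)) P := by
    have := hind0.comp (hg.comp hG)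
      (measurable_pi_apply (⟨some (k + 1), by simp⟩ : ({some (k + 1)} : Finset (Option ℕ))))
    rw [hk]
    exact this
  have hXm : AEMeasurable (Xb k) P := by
    rw [hk]
    exact hG.comp_aemeasurable (aemeasurable_pi_lambda _ fun i => hFm i)
  have hYm : AEMeasurable (fun ω => Xb k ω - h • gradient f (Xb k ω)) P := hg.comp_aemeasurable hXm
  have hprod := (indepFun_iff_map_prod_eq_prod_map_map hYm (hξmeas (k + 1)).aemeasurable).1 hind
  have hΦ : Measurable (fun p : Euc d × Euc d =>
      (‖p.1 + Real.sqrt (2 * h) • p.2‖₊ : ℝ≥0∞) ^ 2) := by fun_prop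
  have hs : Real.sqrt (2 * h) ^ 2 = 2 * h := Real.sq_sqrt (by positivity)
  have : IsProbabilityMeasure (P.map (ξ (k + 1))) :=
    Measure.isProbabilityMeasure_map (hξmeas (k + 1)).aemeasurable
  calc (∫⁻ ω, (‖Xb (k + 1) ω‖₊ : ℝ≥0∞) ^ 2 ∂P)
      = ∫⁻ p, (‖p.1 + Real.sqrt (2 * h) • p.2‖₊ : ℝ≥0∞) ^ 2
          ∂(P.map (fun ω => (Xb k ω - h • gradient f (Xb k ω), ξ (k + 1) ω))) := by
        rw [lintegral_map' hΦ.aemeasurable (hYm.prodMk (hξmeas (k + 1)).aemeasurable), hXb k]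
    _ = ∫⁻ y, ((‖y‖₊ : ℝ≥0∞) ^ 2 + ENNReal.ofReal (2 * h * d))
          ∂(P.map (fun ω => Xb k ω - h • gradient f (Xb k ω))) := by
        rw [hprod, lintegral_prod _ hΦ.aemeasurable, hξlaw]
        simp_rw [gauss_vec, hs]
    _ = ∫⁻ ω, ((‖Xb k ω - h • gradient f (Xb k ω)‖₊ : ℝ≥0∞) ^ 2 + ENNReal.ofReal (2 * h * d)) ∂P := by
        rw [lintegral_map' (by fun_prop) hYm]
    _ ≤ ∫⁻ ω, (ENNReal.ofReal (1 - 7 / 4 * m * h) * (‖Xb k ω‖₊ : ℝ≥0∞) ^ 2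
          + ENNReal.ofReal (2 * h * d)) ∂P := by
        refine lintegral_mono fun ω => ?_
        gcongr
        rw [nnnorm_sq_ofReal, nnnorm_sq_ofReal, ← ENNReal.ofReal_mul' (by positivity)]
        exact ENNReal.ofReal_le_ofReal
          (step_contract hm hmL hf hHess hgrad0 hh0 hh1 (Xb k ω))
    _ = _ := by
        rw [lintegral_add_right _ measurable_const, lintegral_const_mul' _ _ ENNReal.ofReal_ne_top]
        simp
end
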